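/- Let X and Y be random vectors in ℝⁿ that are elliptically distributed with the same location μ ∈ ℝⁿ and the same characteristic generator φ, with dispersion matrices Σ_x and Σ_y respectively, and let A = I_n − (1/n)·1_{n×n} be the centering matrix. If there exists ε ∈ ℝ such that Σ_y − Σ_x + ε·1_{n×n} is positive semidefinite, then G_n(AX − Aμ) ≤_st G_n(AY − Aμ). In particular, if μ = c·1_n for some c ∈ ℝ (including μ = 0), then G_n(X) ≤_st G_n(Y). -/

import Mathlib

open MeasureTheory ProbabilityTheory Matrix

/-- Gini index of `x ∈ ℝⁿ`: `G_n(x) = (1/n²) ∑_i ∑_j |x_i − x_j|`. -/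
noncomputable def gini {n : ℕ} (x : Fin n → ℝ) : ℝ :=
  (1 / (n : ℝ) ^ 2) * ∑ i, ∑ j, |x i - x j|

/-- Characteristic function of a random vector `X : Ω → ℝⁿ` at `t ∈ ℝⁿ`:
`E[exp(i⟨t,X⟩)]`. -/
noncomputable def charFn {Ω : Type*} [MeasurableSpace Ω] {n : ℕ}
    (P : Measure Ω) (X : Ω → (Fin n → ℝ)) (t : Fin n → ℝ) : ℂ :=
  ∫ ω, Complex.exp (((∑ i, t i * X ω i : ℝ) : ℂ) * Complex.I) ∂P

/-- The centering matrix `A = Iₙ − (1/n)·1_{n×n}`. -/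
noncomputable def centeringMatrix (n : ℕ) : Matrix (Fin n) (Fin n) ℝ :=
  1 - ((n : ℝ)⁻¹) • Matrix.of (fun _ _ => (1 : ℝ))

open scoped ENNReal

lemma bm_one_compact (K L : Set ℝ) (hK : IsCompact K) (hL : IsCompact L) (hKn : K.Nonempty)
    (hLn : L.Nonempty) (C : Set ℝ) (h : ∀ a ∈ K, ∀ b ∈ L, (a + b) / 2 ∈ C) :
    volume K + volume L ≤ 2 * volume C := by
  obtain ⟨a, haK, ha⟩ := hK.exists_isGreatest hKn
  obtain ⟨b, hbL, hb⟩ := hL.exists_isLeast hLn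
  have key : ∀ (M : Set ℝ) (c : ℝ), volume ((fun x : ℝ => 2 * x) ⁻¹' ((fun x => x - c) ⁻¹' M))
      = ENNReal.ofReal (1/2) * volume M := by
    intro M c
    rw [Real.volume_preimage_mul_left (by norm_num)]
    congr 1
    · norm_num
    · simp only [sub_eq_add_neg]
      exact measure_preimage_add_right volume (-c) M
  set K' := (fun x : ℝ => 2 * x) ⁻¹' ((fun x => x - b) ⁻¹' K) with hK'
  set L' := (fun x : ℝ => 2 * x) ⁻¹' ((fun x => x - a) ⁻¹' L) with hL'
  have hL'm : MeasurableSet L' := by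
    have : Measurable (fun x : ℝ => 2 * x - a) := by fun_prop
    exact this hL.measurableSet
  have hsub : K' ∪ L' ⊆ C := by
    rintro x (hx | hx)
    · have := h _ hx _ hbL
      simpa using this
    · have := h _ haK _ hx
      have e : (a + (2 * x - a)) / 2 = x := by ring
      rw [e] at this
      exact this
  have hinter : K' ∩ L' ⊆ {(a + b) / 2} := by
    rintro x ⟨h1, h2⟩
    have h3 := ha h1
    have h4 := hb h2
    simp only [] at h3 h4
    simp only [Set.mem_singleton_iff]
    linarith
  have hi0 : volume (K' ∩ L') = 0 := measure_mono_null hinter (by simp)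
  have hu := measure_union_add_inter (μ := volume) K' hL'm
  rw [hi0, add_zero, key, key] at hu
  have h2 : (2 : ℝ≥0∞) * ENNReal.ofReal (1/2) = 1 := by
    rw [← ENNReal.ofReal_ofNat 2, ← ENNReal.ofReal_mul (by norm_num)]; norm_num
  calc volume K + volume L = 2 * volume (K' ∪ L') := by
        rw [hu, mul_add, ← mul_assoc, ← mul_assoc, h2, one_mul, one_mul]
    _ ≤ 2 * volume C := by gcongr

lemma bm_one (A B C : Set ℝ) (hA : MeasurableSet A) (hB : MeasurableSet B) (hAn : A.Nonempty)
    (hBn : B.Nonempty) (h : ∀ a ∈ A, ∀ b ∈ B, (a + b) / 2 ∈ C) :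
    volume A + volume B ≤ 2 * volume C := by
  obtain ⟨a0, ha0⟩ := hAn
  obtain ⟨b0, hb0⟩ := hBn
  rw [hA.measure_eq_iSup_isCompact, hB.measure_eq_iSup_isCompact]
  simp only [iSup_and']
  refine ENNReal.biSup_add_biSup_le' (p := fun K : Set ℝ => K ⊆ A ∧ IsCompact K)
    (q := fun K : Set ℝ => K ⊆ B ∧ IsCompact K)
    ⟨∅, by simp⟩ ⟨∅, by simp⟩ ?_
  rintro K ⟨hKA, hK⟩ L ⟨hLB, hL⟩
  calc volume K + volume L ≤ volume (insert a0 K) + volume (insert b0 L) := by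
        gcongr <;> exact Set.subset_insert _ _
    _ ≤ _ := bm_one_compact _ _ (hK.insert _) (hL.insert _) ⟨a0, by simp⟩ ⟨b0, by simp⟩ C ?_
  intro a ha b hb
  refine h a ?_ b ?_
  · rcases ha with rfl | ha
    · exact ha0
    · exact hKA ha
  · rcases hb with rfl | hb
    · exact hb0
    · exact hLB hb

lemma pl_one_normalized (f g h : ℝ → ℝ) (hf : Measurable f) (hg : Measurable g)
    (hh : Measurable h) (f0 : ∀ x, 0 ≤ f x) (g0 : ∀ x, 0 ≤ g x) (h0 : ∀ x, 0 ≤ h x)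
    (f1 : ∀ x, f x ≤ 1) (g1 : ∀ x, g x ≤ 1)
    (fs : ∀ t < 1, ∃ x, t < f x) (gs : ∀ t < 1, ∃ x, t < g x)
    (H : ∀ x y, f x * g y ≤ h ((x + y) / 2) ^ 2) :
    (∫⁻ x, ENNReal.ofReal (f x)) + (∫⁻ x, ENNReal.ofReal (g x))
      ≤ 2 * ∫⁻ x, ENNReal.ofReal (h x) := by
  rw [lintegral_eq_lintegral_meas_lt volume (Filter.Eventually.of_forall f0) hf.aemeasurable,
    lintegral_eq_lintegral_meas_lt volume (Filter.Eventually.of_forall g0) hg.aemeasurable,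
    lintegral_eq_lintegral_meas_lt volume (Filter.Eventually.of_forall h0) hh.aemeasurable]
  rw [← lintegral_const_mul' _ _ (by simp), ← lintegral_add_left]
  · refine setLIntegral_mono' measurableSet_Ioi ?_
    intro t ht
    have ht : 0 < t := ht
    by_cases h1 : t < 1
    · refine bm_one _ _ _ (measurableSet_lt measurable_const hf)
        (measurableSet_lt measurable_const hg) (fs t h1) (gs t h1) ?_
      intro a ha b hb
      have ha : t < f a := ha
      have hb : t < g b := hb
      have : t ^ 2 < h ((a + b) / 2) ^ 2 := by
        refine lt_of_lt_of_le ?_ (H a b)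
        nlinarith
      exact lt_of_pow_lt_pow_left₀ 2 (h0 _) this
    · have e1 : {a | t < f a} = ∅ := by
        ext x; simp; linarith [f1 x]
      have e2 : {a | t < g a} = ∅ := by
        ext x; simp; linarith [g1 x]
      rw [e1, e2]; simp
  · exact (Antitone.measurable (fun s t hst => measure_mono (fun x (hx : t < f x) => lt_of_le_of_lt hst hx)))

lemma pl_one_bdd (f g h : ℝ → ℝ≥0∞) (hf : Measurable f) (hg : Measurable g)
    (hh : Measurable h) (N : ℝ≥0∞) (hN : N ≠ ∞) (fN : ∀ x, f x ≤ N) (gN : ∀ x, g x ≤ N)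
    (hN' : ∀ x, h x ≤ N)
    (H : ∀ x y, f x * g y ≤ h ((x + y) / 2) ^ 2) :
    (∫⁻ x, f x) * (∫⁻ x, g x) ≤ (∫⁻ x, h x) ^ 2 := by
  set F := ⨆ x, f x with hF
  set G := ⨆ x, g x with hG
  have hFN : F ≠ ∞ := ne_top_of_le_ne_top hN (iSup_le fN)
  have hGN : G ≠ ∞ := ne_top_of_le_ne_top hN (iSup_le gN)
  by_cases hF0 : F = 0
  · have : ∀ x, f x = 0 := by simpa [hF] using hF0
    simp [this]
  by_cases hG0 : G = 0
  · have : ∀ x, g x = 0 := by simpa [hG] using hG0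
    simp [this]
  have hFp : 0 < F.toReal := ENNReal.toReal_pos hF0 hFN
  have hGp : 0 < G.toReal := ENNReal.toReal_pos hG0 hGN
  set s := Real.sqrt (F.toReal * G.toReal) with hs
  have hsp : 0 < s := Real.sqrt_pos.2 (mul_pos hFp hGp)
  have hs2 : s ^ 2 = F.toReal * G.toReal := Real.sq_sqrt (by positivity)
  have fin : ∀ x, f x ≠ ∞ := fun x => ne_top_of_le_ne_top hN (fN x)
  have gin : ∀ x, g x ≠ ∞ := fun x => ne_top_of_le_ne_top hN (gN x)
  have hin : ∀ x, h x ≠ ∞ := fun x => ne_top_of_le_ne_top hN (hN' x)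
  have main := pl_one_normalized (fun x => (f x).toReal / F.toReal) (fun x => (g x).toReal / G.toReal)
    (fun x => (h x).toReal / s) (by fun_prop) (by fun_prop) (by fun_prop)
    (fun x => by positivity) (fun x => by positivity) (fun x => by positivity)
    (fun x => by
      rw [div_le_one hFp]
      exact ENNReal.toReal_mono hFN (le_iSup f x))
    (fun x => by
      rw [div_le_one hGp]
      exact ENNReal.toReal_mono hGN (le_iSup g x))
    (fun t ht => by
      by_cases ht0 : t < 0
      · exact ⟨0, lt_of_lt_of_le ht0 (by positivity)⟩
      push Not at ht0
      have : ENNReal.ofReal (t * F.toReal) < F := by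
        rw [ENNReal.ofReal_lt_iff_lt_toReal (by positivity) hFN]
        nlinarith
      obtain ⟨x, hx⟩ := lt_iSup_iff.1 this
      refine ⟨x, ?_⟩
      rw [lt_div_iff₀ hFp]
      exact (ENNReal.ofReal_lt_iff_lt_toReal (by positivity) (fin x)).1 hx)
    (fun t ht => by
      by_cases ht0 : t < 0
      · exact ⟨0, lt_of_lt_of_le ht0 (by positivity)⟩
      push Not at ht0
      have : ENNReal.ofReal (t * G.toReal) < G := by
        rw [ENNReal.ofReal_lt_iff_lt_toReal (by positivity) hGN]
        nlinarith
      obtain ⟨x, hx⟩ := lt_iSup_iff.1 this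
      refine ⟨x, ?_⟩
      rw [lt_div_iff₀ hGp]
      exact (ENNReal.ofReal_lt_iff_lt_toReal (by positivity) (gin x)).1 hx)
    (fun x y => by
      have := ENNReal.toReal_mono (by simp [hin]) (H x y)
      rw [ENNReal.toReal_mul, ENNReal.toReal_pow] at this
      rw [div_mul_div_comm, div_pow, hs2]
      gcongr)
  have conv : ∀ (k : ℝ → ℝ≥0∞) (c : ℝ), (∀ x, k x ≠ ∞) → 0 < c →
      ∫⁻ x, ENNReal.ofReal ((k x).toReal / c) = ENNReal.ofReal c⁻¹ * ∫⁻ x, k x := by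
    intro k c hk hc
    rw [← lintegral_const_mul' _ _ (by simp)]
    refine lintegral_congr fun x => ?_
    rw [div_eq_inv_mul, ENNReal.ofReal_mul (by positivity), ENNReal.ofReal_toReal (hk x)]
  rw [conv f _ fin hFp, conv g _ gin hGp, conv h _ hin hsp] at main
  by_cases hht : ∫⁻ x, h x = ∞
  · simp [hht]
  have hne : ENNReal.ofReal (F.toReal)⁻¹ * ∫⁻ x, f x ≠ ∞ := by
    refine ne_top_of_le_ne_top (b := 2 * (ENNReal.ofReal s⁻¹ * ∫⁻ x, h x)) ?_ (le_trans le_self_add main)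
    exact ENNReal.mul_ne_top (by simp) (ENNReal.mul_ne_top (by simp) hht)
  have hne' : ENNReal.ofReal (G.toReal)⁻¹ * ∫⁻ x, g x ≠ ∞ := by
    refine ne_top_of_le_ne_top (b := 2 * (ENNReal.ofReal s⁻¹ * ∫⁻ x, h x)) ?_ (le_trans le_add_self main)
    exact ENNReal.mul_ne_top (by simp) (ENNReal.mul_ne_top (by simp) hht)
  have hft : ∫⁻ x, f x ≠ ∞ := by
    intro e; rw [e] at hne; apply hne; rw [ENNReal.mul_top]; simpa using hFp
  have hgt : ∫⁻ x, g x ≠ ∞ := by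
    intro e; rw [e] at hne'; apply hne'; rw [ENNReal.mul_top]; simpa using hGp
  have mr := ENNReal.toReal_mono (ENNReal.mul_ne_top (by simp) (ENNReal.mul_ne_top (by simp) hht)) main
  rw [ENNReal.toReal_add hne hne'] at mr
  simp only [ENNReal.toReal_mul] at mr
  rw [ENNReal.toReal_ofReal (by positivity), ENNReal.toReal_ofReal (by positivity),
    ENNReal.toReal_ofReal (by positivity)] at mr
  rw [← ENNReal.toReal_le_toReal (ENNReal.mul_ne_top hft hgt) (by simp [hht]), ENNReal.toReal_mul,
    ENNReal.toReal_pow]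
  set a := (∫⁻ x, f x).toReal
  set b := (∫⁻ x, g x).toReal
  set c := (∫⁻ x, h x).toReal
  have ha : 0 ≤ a := ENNReal.toReal_nonneg
  have hb : 0 ≤ b := ENNReal.toReal_nonneg
  have hc : 0 ≤ c := ENNReal.toReal_nonneg
  norm_num at mr
  set u := F.toReal⁻¹ * a
  set v := G.toReal⁻¹ * b
  have hu : a = F.toReal * u := by simp only [u]; field_simp
  have hv : b = G.toReal * v := by simp only [v]; field_simp
  have hu0 : 0 ≤ u := by positivity
  have hv0 : 0 ≤ v := by positivity
  have h3 : (u + v) * s ≤ 2 * c := by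
    have := mul_le_mul_of_nonneg_right mr hsp.le
    calc (u + v) * s ≤ _ := this
      _ = 2 * c := by field_simp
  have h4 : ((u + v) * s) ^ 2 ≤ (2 * c) ^ 2 := by gcongr
  rw [hu, hv]
  have : F.toReal * u * (G.toReal * v) = s ^ 2 * (u * v) := by rw [hs2]; ring
  rw [this]
  nlinarith [mul_nonneg (sq_nonneg s) (sq_nonneg (u - v))]

lemma pl_one (f g h : ℝ → ℝ≥0∞) (hf : Measurable f) (hg : Measurable g)
    (hh : Measurable h) (H : ∀ x y, f x * g y ≤ h ((x + y) / 2) ^ 2) :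
    (∫⁻ x, f x) * (∫⁻ x, g x) ≤ (∫⁻ x, h x) ^ 2 := by
  have key : ∀ N : ℕ, (∫⁻ x, min (f x) N) * (∫⁻ x, min (g x) N) ≤ (∫⁻ x, h x) ^ 2 := by
    intro N
    refine le_trans (pl_one_bdd (fun x => min (f x) N) (fun x => min (g x) N)
      (fun x => min (h x) N) (by fun_prop) (by fun_prop) (by fun_prop) N (by simp)
      (fun x => min_le_right _ _) (fun x => min_le_right _ _) (fun x => min_le_right _ _) ?_) ?_
    · intro x y
      rcases min_choice (h ((x+y)/2)) (N : ℝ≥0∞) with e | e <;> rw [e]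
      · exact le_trans (by gcongr <;> exact min_le_left _ _) (H x y)
      · rw [sq]; gcongr <;> exact min_le_right _ _
    · gcongr; exact min_le_left _ _
  have lim : ∀ k : ℝ → ℝ≥0∞, Measurable k →
      Filter.Tendsto (fun N : ℕ => ∫⁻ x, min (k x) N) Filter.atTop (nhds (∫⁻ x, k x)) := by
    intro k hk
    refine lintegral_tendsto_of_tendsto_of_monotone (fun n => by fun_prop) ?_ ?_
    · refine Filter.Eventually.of_forall fun x m n hmn => ?_
      have : (m : ℝ≥0∞) ≤ n := by exact_mod_cast hmn
      exact min_le_min_left _ this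
    · refine Filter.Eventually.of_forall fun x => ?_
      have := (tendsto_const_nhds (x := k x)).min ENNReal.tendsto_nat_nhds_top
      simpa using this
  by_cases h0 : ∫⁻ x, f x = 0
  · simp [h0]
  by_cases h0' : ∫⁻ x, g x = 0
  · simp [h0']
  exact le_of_tendsto (ENNReal.Tendsto.mul (lim f hf) (Or.inl h0) (lim g hg) (Or.inl h0'))
    (Filter.Eventually.of_forall key)

def PLSpace (E : Type*) [AddCommGroup E] [Module ℝ E] [MeasureSpace E] : Prop :=
  ∀ f g h : E → ℝ≥0∞, Measurable f → Measurable g → Measurable h →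
    (∀ x y, f x * g y ≤ h ((1/2 : ℝ) • (x + y)) ^ 2) →
    (∫⁻ x, f x) * (∫⁻ x, g x) ≤ (∫⁻ x, h x) ^ 2

lemma plSpace_real : PLSpace ℝ := by
  intro f g h hf hg hh H
  refine pl_one f g h hf hg hh fun x y => ?_
  have := H x y
  rwa [smul_eq_mul, one_div, inv_mul_eq_div] at this

lemma PLSpace.prod {E F : Type*} [AddCommGroup E] [Module ℝ E] [MeasureSpace E]
    [AddCommGroup F] [Module ℝ F] [MeasureSpace F] [SigmaFinite (volume : Measure F)]
    (hE : PLSpace E) (hF : PLSpace F) : PLSpace (E × F) := by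
  intro f g h hf hg hh H
  change (∫⁻ x, f x ∂(volume.prod volume)) * (∫⁻ x, g x ∂(volume.prod volume))
    ≤ (∫⁻ x, h x ∂(volume.prod volume)) ^ 2
  rw [lintegral_prod _ hf.aemeasurable, lintegral_prod _ hg.aemeasurable,
    lintegral_prod _ hh.aemeasurable]
  refine hE _ _ _ hf.lintegral_prod_right' hg.lintegral_prod_right' hh.lintegral_prod_right' ?_
  intro x y
  refine hF _ _ _ (by fun_prop) (by fun_prop) (by fun_prop) ?_
  intro u v
  exact H (x, u) (y, v)

lemma PLSpace.transfer {E F : Type*} [AddCommGroup E] [Module ℝ E] [MeasureSpace E]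
    [AddCommGroup F] [Module ℝ F] [MeasureSpace F] (hE : PLSpace E) (e : E ≃ᵐ F)
    (he : MeasurePreserving e) (hl : ∀ x y, e ((1/2 : ℝ) • (x + y)) = (1/2 : ℝ) • (e x + e y)) :
    PLSpace F := by
  intro f g h hf hg hh H
  rw [← he.lintegral_comp hf, ← he.lintegral_comp hg, ← he.lintegral_comp hh]
  refine hE _ _ _ (hf.comp e.measurable) (hg.comp e.measurable) (hh.comp e.measurable) ?_
  intro x y
  have := H (e x) (e y)
  rwa [← hl] at this

lemma plSpace_fin (n : ℕ) : PLSpace (Fin n → ℝ) := by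
  induction n with
  | zero =>
    intro f g h hf hg hh H
    simp only [lintegral_unique]
    have := H default default
    rw [Subsingleton.elim ((1/2 : ℝ) • (default + default : Fin 0 → ℝ)) default] at this
    simp only [volume_pi, Measure.pi_univ, Finset.univ_eq_empty, Finset.prod_empty, mul_one]
    convert this using 2 <;> congr 1 <;> exact Subsingleton.elim _ _
  | succ n ih =>
    refine (plSpace_real.prod ih).transfer (MeasurableEquiv.piFinSuccAbove (fun _ => ℝ) 0).symm
      (volume_preserving_piFinSuccAbove (fun _ => ℝ) 0).symm ?_
    intro x y
    apply (MeasurableEquiv.piFinSuccAbove (fun _ => ℝ) 0).injective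
    rw [MeasurableEquiv.apply_symm_apply]
    ext i <;> simp [MeasurableEquiv.piFinSuccAbove, Fin.insertNthEquiv, Fin.tail]

lemma plSpace_pi (ι : Type) [Fintype ι] : PLSpace (ι → ℝ) := by
  let e := Fintype.equivFin ι
  refine (plSpace_fin (Fintype.card ι)).transfer (MeasurableEquiv.piCongrLeft (fun _ => ℝ) e.symm)
    (volume_measurePreserving_piCongrLeft (fun _ => ℝ) e.symm) ?_
  intro x y
  ext i
  obtain ⟨j, rfl⟩ := e.symm.surjective i
  simp [MeasurableEquiv.coe_piCongrLeft, Equiv.piCongrLeft_apply_apply]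
  ring

lemma anderson_set {ι : Type} [Fintype ι] (K C : Set (ι → ℝ)) (hK : Convex ℝ K) (hC : Convex ℝ C)
    (hKm : MeasurableSet K) (hCm : MeasurableSet C) (hKs : ∀ x ∈ K, -x ∈ K) (hCs : ∀ x ∈ C, -x ∈ C)
    (v : ι → ℝ) :
    volume (K ∩ {w | w - v ∈ C}) ≤ volume (K ∩ C) := by
  set A := K ∩ {w | w - v ∈ C} with hA
  have hAm : MeasurableSet A := hKm.inter ((measurable_id.sub_const v) hCm)
  have hAn : MeasurableSet (-A) := hAm.neg
  have h1 : volume (-A) = volume A := Measure.measure_neg volume A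
  have := plSpace_pi ι (A.indicator 1) ((-A).indicator 1) ((K ∩ C).indicator 1)
    (measurable_one.indicator hAm) (measurable_one.indicator hAn)
    (measurable_one.indicator (hKm.inter hCm)) ?_
  · rw [lintegral_indicator_one hAm, lintegral_indicator_one hAn,
      lintegral_indicator_one (hKm.inter hCm), h1, ← sq] at this
    exact (ENNReal.pow_le_pow_left_iff (by norm_num)).1 this
  · intro x y
    by_cases hx : x ∈ A
    swap
    · simp [hx]
    by_cases hy : y ∈ -A
    swap
    · simp [hy]
    have hy' : -y ∈ A := hy
    have hm : (1/2 : ℝ) • (x + y) ∈ K ∩ C := by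
      constructor
      · have h3 := hKs _ hy'.1
        rw [neg_neg] at h3
        rw [smul_add]
        exact hK hx.1 h3 (by norm_num) (by norm_num) (by norm_num)
      · have h2 : x - v ∈ C := hx.2
        have h3 := hCs _ hy'.2
        have : (1/2 : ℝ) • (x + y) = (1/2 : ℝ) • (x - v) + (1/2 : ℝ) • (- (-y - v)) := by
          ext i; simp; ring
        rw [this]
        exact hC h2 h3 (by norm_num) (by norm_num) (by norm_num)
    rw [Set.indicator_of_mem hx, Set.indicator_of_mem hy, Set.indicator_of_mem hm]
    simp

lemma hasDerivAt_setIntegral_compact {E : Type*} [NormedAddCommGroup E] [MeasurableSpace E]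
    [BorelSpace E] [SecondCountableTopology E] (μ : Measure E) [IsFiniteMeasureOnCompacts μ]
    (F F' : ℝ → E → ℝ)
    (x₀ δ : ℝ) (hδ : 0 < δ) (S : Set E) (hS : IsCompact S)
    (hF : ∀ x, Continuous (F x)) (hF' : Continuous (Function.uncurry F'))
    (hd : ∀ x ∈ Metric.ball x₀ δ, ∀ w, HasDerivAt (F · w) (F' x w) x)
    (h0 : ∀ w ∉ S, F x₀ w = 0) (h0' : ∀ x ∈ Metric.ball x₀ δ, ∀ w ∉ S, F' x w = 0) (K : Set E) :
    HasDerivAt (fun x => ∫ w in K, F x w ∂μ) (∫ w in K, F' x₀ w ∂μ) x₀ := by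
  obtain ⟨C, hC⟩ := ((isCompact_closedBall x₀ δ).prod hS).exists_bound_of_continuousOn
    hF'.continuousOn
  have hSi : Integrable (S.indicator (fun _ => C)) μ := by
    rw [integrable_indicator_iff hS.measurableSet]
    exact integrableOn_const hS.measure_lt_top.ne
  refine (hasDerivAt_integral_of_dominated_loc_of_deriv_le (μ := μ.restrict K)
    (bound := S.indicator (fun _ => C)) (Metric.ball_mem_nhds x₀ hδ) ?_ ?_ ?_ ?_ ?_ ?_).2
  · exact Filter.Eventually.of_forall fun x => (hF x).aestronglyMeasurable
  · refine Integrable.integrableOn ?_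
    refine (hF x₀).integrable_of_hasCompactSupport ?_
    exact HasCompactSupport.intro hS h0
  · have : Continuous (F' x₀) := hF'.comp (Continuous.prodMk_right x₀)
    exact this.aestronglyMeasurable
  · refine Filter.Eventually.of_forall fun w x hx => ?_
    by_cases hw : w ∈ S
    · rw [Set.indicator_of_mem hw]
      exact hC (x, w) ⟨Metric.ball_subset_closedBall hx, hw⟩
    · rw [Set.indicator_of_notMem hw, h0' x hx w hw]; simp
  · exact hSi.integrableOn
  · exact Filter.Eventually.of_forall fun w x hx => hd x hx w

lemma second_deriv_nonpos (G G' : ℝ → ℝ) (c : ℝ) (hG : ∀ x, HasDerivAt G (G' x) x)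
    (hG' : HasDerivAt G' c 0) (hmax : ∀ x, G x ≤ G 0) : c ≤ 0 := by
  by_contra hc
  push Not at hc
  have e1 : deriv G = G' := funext fun x => (hG x).deriv
  have hmaxL : IsLocalMax G 0 := Filter.Eventually.of_forall hmax
  have hd0 : deriv G 0 = 0 := hmaxL.deriv_eq_zero
  have hmin : IsLocalMin G 0 := isLocalMin_of_deriv_deriv_pos (by rw [e1, hG'.deriv]; exact hc) hd0
    (hG 0).continuousAt
  have hconst : G =ᶠ[nhds 0] fun _ => G 0 := by
    filter_upwards [hmin] with x hx
    exact le_antisymm (hmax x) hx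
  have h2 : G' =ᶠ[nhds 0] fun _ => 0 := by
    have := hconst.deriv
    rw [e1] at this
    simpa using this
  have h3 := h2.deriv_eq
  rw [hG'.deriv] at h3
  simp at h3
  linarith

noncomputable def sf {ι : Type} [Fintype ι] [DecidableEq ι] (k : ι) (τ x : ℝ) (w : ι → ℝ) : ℝ :=
  ∑ i ∈ Finset.univ.erase k, w i ^ 2 + τ ^ 2 * (w k - x) ^ 2

section
variable {ι : Type} [Fintype ι] [DecidableEq ι] (k : ι)

lemma sf_shift (τ x : ℝ) (w : ι → ℝ) : sf k τ x w = sf k τ 0 (w - Pi.single k x) := by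
  simp only [sf]
  congr 1
  · refine Finset.sum_congr rfl fun i hi => ?_
    have : i ≠ k := Finset.ne_of_mem_erase hi
    simp [this]
  · simp

lemma sf_neg (τ : ℝ) (w : ι → ℝ) : sf k τ 0 (-w) = sf k τ 0 w := by
  simp [sf]

lemma sf_one (w : ι → ℝ) : sf k 1 0 w = ∑ i, w i ^ 2 := by
  simp [sf]

lemma sf_convex (τ : ℝ) (v w : ι → ℝ) (a b : ℝ) (ha : 0 ≤ a) (hb : 0 ≤ b) (hab : a + b = 1) :
    sf k τ 0 (a • v + b • w) ≤ max (sf k τ 0 v) (sf k τ 0 w) := by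
  have key : ∀ p q : ℝ, (a * p + b * q) ^ 2 ≤ a * p ^ 2 + b * q ^ 2 := by
    intro p q
    obtain rfl : b = 1 - a := by linarith
    nlinarith [mul_nonneg (mul_nonneg ha hb) (sq_nonneg (p - q))]
  have : sf k τ 0 (a • v + b • w) ≤ a * sf k τ 0 v + b * sf k τ 0 w := by
    simp only [sf, Pi.add_apply, Pi.smul_apply, smul_eq_mul, sub_zero]
    have h1 : ∑ i ∈ Finset.univ.erase k, (a * v i + b * w i) ^ 2 ≤
      a * ∑ i ∈ Finset.univ.erase k, v i ^ 2 + b * ∑ i ∈ Finset.univ.erase k, w i ^ 2 := by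
      rw [Finset.mul_sum, Finset.mul_sum, ← Finset.sum_add_distrib]
      exact Finset.sum_le_sum fun i _ => key _ _
    have h2 := mul_le_mul_of_nonneg_left (key (v k) (w k)) (sq_nonneg τ)
    linarith
  refine this.trans ?_
  have h1 := mul_le_mul_of_nonneg_left (le_max_left (sf k τ 0 v) (sf k τ 0 w)) ha
  have h2 := mul_le_mul_of_nonneg_left (le_max_right (sf k τ 0 v) (sf k τ 0 w)) hb
  calc _ ≤ _ := add_le_add h1 h2
    _ = _ := by rw [← add_mul, hab, one_mul]

lemma sf_large (R x x₀ τ : ℝ) (hR : 1 < R) (hτ : 1/2 ≤ τ) (hx : |x - x₀| ≤ 1) (w : ι → ℝ)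
    (hw : w ∉ Metric.closedBall (0 : ι → ℝ) (2 * R + |x₀| + 1)) : R < sf k τ x w := by
  have hρ : 0 ≤ 2 * R + |x₀| + 1 := by positivity
  rw [mem_closedBall_zero_iff, pi_norm_le_iff_of_nonneg hρ] at hw
  push Not at hw
  obtain ⟨i, hi⟩ := hw
  rw [Real.norm_eq_abs] at hi
  have hs0 : 0 ≤ ∑ i ∈ Finset.univ.erase k, w i ^ 2 := Finset.sum_nonneg fun i _ => sq_nonneg _
  have hx0 := abs_nonneg x₀
  unfold sf
  by_cases hik : i = k
  · subst hik
    have h1 : |x| ≤ |x₀| + 1 := by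
      have := abs_sub_abs_le_abs_sub x x₀
      linarith
    have h2 : 2 * R < |w i - x| := by
      have := abs_sub_abs_le_abs_sub (w i) x
      linarith
    have h3 : 4 * R < (w i - x) ^ 2 := by
      rw [← sq_abs]; nlinarith
    have h4 : (1/4) * (w i - x) ^ 2 ≤ τ ^ 2 * (w i - x) ^ 2 := by
      have : 1/4 ≤ τ ^ 2 := by nlinarith
      nlinarith [sq_nonneg (w i - x)]
    linarith
  · have h1 : w i ^ 2 ≤ ∑ i ∈ Finset.univ.erase k, w i ^ 2 :=
      Finset.single_le_sum (f := fun i => w i ^ 2) (fun i _ => sq_nonneg _) (by simp [hik])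
    have h2 : R < w i ^ 2 := by rw [← sq_abs]; nlinarith
    have h3 : 0 ≤ τ ^ 2 * (w k - x) ^ 2 := by positivity
    linarith

lemma continuous_sf3 : Continuous (fun p : ℝ × ℝ × (ι → ℝ) => sf k p.1 p.2.1 p.2.2) := by
  unfold sf
  fun_prop

lemma anderson_fun (Q : ℝ → ℝ) (hQc : Continuous Q) (hQa : Antitone Q) (hQ0 : ∀ s, 0 ≤ Q s)
    (R : ℝ) (hR : 1 < R) (hQR : ∀ s, R < s → Q s = 0) (τ : ℝ) (hτ : 1/2 ≤ τ)
    (K : Set (ι → ℝ)) (hK : Convex ℝ K) (hKm : MeasurableSet K) (hKs : ∀ x ∈ K, -x ∈ K) (x : ℝ) :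
    ∫ w in K, Q (sf k τ x w) ≤ ∫ w in K, Q (sf k τ 0 w) := by
  have hcont : ∀ x, Continuous (fun w => Q (sf k τ x w)) := fun x =>
    hQc.comp ((continuous_sf3 k).comp (by fun_prop : Continuous fun w : ι → ℝ => (τ, x, w)))
  have hIntg : ∀ x, Integrable (fun w => Q (sf k τ x w)) := by
    intro x
    refine (hcont x).integrable_of_hasCompactSupport ?_
    refine HasCompactSupport.intro (isCompact_closedBall (0 : ι → ℝ) (2 * R + |x| + 1)) ?_
    intro w hw
    exact hQR _ (sf_large k R x x τ hR hτ (by simp) w hw)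
  rw [integral_eq_lintegral_of_nonneg_ae (Filter.Eventually.of_forall fun w => hQ0 _)
      (hcont x).aestronglyMeasurable,
    integral_eq_lintegral_of_nonneg_ae (Filter.Eventually.of_forall fun w => hQ0 _)
      (hcont 0).aestronglyMeasurable]
  refine ENNReal.toReal_mono ?_ ?_
  · exact ((hIntg 0).integrableOn.lintegral_lt_top).ne
  rw [lintegral_eq_lintegral_meas_lt _ (Filter.Eventually.of_forall fun w => hQ0 _)
      (hcont x).aemeasurable,
    lintegral_eq_lintegral_meas_lt _ (Filter.Eventually.of_forall fun w => hQ0 _)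
      (hcont 0).aemeasurable]
  refine lintegral_mono fun t => ?_
  have hm : ∀ x, MeasurableSet {w | t < Q (sf k τ x w)} := fun x =>
    measurableSet_lt measurable_const (hcont x).measurable
  try simp only []
  rw [Measure.restrict_apply (hm x), Measure.restrict_apply (hm 0), Set.inter_comm,
    Set.inter_comm _ K]
  have := anderson_set K {w | t < Q (sf k τ 0 w)} hK ?_ hKm (hm 0) hKs ?_ (Pi.single k x)
  · convert this using 3
    ext w
    simp only [Set.mem_ofPred_eq]
    rw [sf_shift]
  · intro v hv w hw a b ha hb hab
    have h1 := hQa (sf_convex k τ v w a b ha hb hab)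
    refine lt_of_lt_of_le ?_ h1
    rcases max_choice (sf k τ 0 v) (sf k τ 0 w) with e | e <;> rw [e]
    · exact hv
    · exact hw
  · intro w hw
    simp only [Set.mem_ofPred_eq] at hw ⊢
    rwa [sf_neg]

lemma mono_tau (Q Q1 Q2 : ℝ → ℝ) (hQ1 : ∀ s, HasDerivAt Q (Q1 s) s)
    (hQ2 : ∀ s, HasDerivAt Q1 (Q2 s) s) (hQ2c : Continuous Q2)
    (hQa : Antitone Q) (hQ0 : ∀ s, 0 ≤ Q s)
    (R : ℝ) (hR : 1 < R) (hQR : ∀ s, R < s → Q s = 0) (hQ1R : ∀ s, R < s → Q1 s = 0)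
    (hQ2R : ∀ s, R < s → Q2 s = 0)
    (K : Set (ι → ℝ)) (hK : Convex ℝ K) (hKm : MeasurableSet K) (hKs : ∀ x ∈ K, -x ∈ K) :
    MonotoneOn (fun τ => ∫ w in K, -2 * τ * Q1 (sf k τ 0 w)) (Set.Ici 1) := by
  have hQc : Continuous Q := continuous_iff_continuousAt.2 fun s => (hQ1 s).continuousAt
  have hQ1c : Continuous Q1 := continuous_iff_continuousAt.2 fun s => (hQ2 s).continuousAt
  have csf := continuous_sf3 k
  have cτ : ∀ τ x, Continuous (fun w : ι → ℝ => sf k τ x w) := fun τ x =>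
    csf.comp (by fun_prop : Continuous fun w : ι → ℝ => (τ, x, w))
  have cτw : Continuous (fun p : ℝ × (ι → ℝ) => sf k p.1 0 p.2) :=
    csf.comp (by fun_prop : Continuous fun p : ℝ × (ι → ℝ) => (p.1, (0:ℝ), p.2))
  have cxw : ∀ τ, Continuous (fun p : ℝ × (ι → ℝ) => sf k τ p.1 p.2) := fun τ =>
    csf.comp (by fun_prop : Continuous fun p : ℝ × (ι → ℝ) => (τ, p.1, p.2))
  have dτ : ∀ τ w, HasDerivAt (fun τ => sf k τ 0 w) (2 * τ * (w k) ^ 2) τ := by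
    intro τ w
    unfold sf
    have := ((hasDerivAt_pow 2 τ).mul_const ((w k - 0) ^ 2)).const_add
      (∑ i ∈ Finset.univ.erase k, w i ^ 2)
    refine HasDerivAt.congr_deriv (f := _) this ?_
    simp
  have dx : ∀ τ x w, HasDerivAt (fun x => sf k τ x w) (-2 * τ ^ 2 * (w k - x)) x := by
    intro τ x w
    unfold sf
    have := ((((hasDerivAt_id x).const_sub (w k)).pow 2).const_mul (τ ^ 2)).const_add
      (∑ i ∈ Finset.univ.erase k, w i ^ 2)
    refine HasDerivAt.congr_deriv (f := _) this ?_
    simp; ring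
  have dI : ∀ τ, 1/2 < τ → HasDerivAt (fun τ => ∫ w in K, -2 * τ * Q1 (sf k τ 0 w))
      (∫ w in K, (-2 * Q1 (sf k τ 0 w) + -2 * τ * (Q2 (sf k τ 0 w) * (2 * τ * (w k) ^ 2)))) τ := by
    intro τ hτ
    refine hasDerivAt_setIntegral_compact volume (fun τ w => -2 * τ * Q1 (sf k τ 0 w))
      (fun τ w => -2 * Q1 (sf k τ 0 w) + -2 * τ * (Q2 (sf k τ 0 w) * (2 * τ * (w k) ^ 2)))
      τ (τ - 1/2) (by linarith) (Metric.closedBall 0 (2 * R + |0| + 1)) (isCompact_closedBall _ _)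
      ?_ ?_ ?_ ?_ ?_ K
    · intro x
      exact continuous_const.mul (hQ1c.comp (cτ x 0))
    · have h1 := hQ1c.comp cτw
      have h2 := hQ2c.comp cτw
      simp only [Function.comp_def] at h1 h2
      simp only [Function.uncurry_def]
      fun_prop
    · intro x hx w
      have := ((hasDerivAt_id x).const_mul (-2)).mul ((hQ2 _).comp x (dτ x w))
      refine HasDerivAt.congr_deriv (f := _) this ?_
      simp
    · intro w hw
      try simp only []
      rw [hQ1R _ (sf_large k R 0 0 τ hR hτ.le (by simp) w hw)]; simp
    · intro x hx w hw
      rw [Metric.mem_ball, Real.dist_eq] at hx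
      have hx1 : 1/2 ≤ x := by have := abs_lt.1 hx; linarith
      try simp only []
      rw [hQ1R _ (sf_large k R 0 0 x hR hx1 (by simp) w hw),
        hQ2R _ (sf_large k R 0 0 x hR hx1 (by simp) w hw)]; simp
  have dG : ∀ τ, 1/2 < τ → ∀ x, HasDerivAt (fun x => ∫ w in K, Q (sf k τ x w))
      (∫ w in K, Q1 (sf k τ x w) * (-2 * τ ^ 2 * (w k - x))) x := by
    intro τ hτ x
    refine hasDerivAt_setIntegral_compact volume (fun x w => Q (sf k τ x w))
      (fun x w => Q1 (sf k τ x w) * (-2 * τ ^ 2 * (w k - x)))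
      x 1 one_pos (Metric.closedBall 0 (2 * R + |x| + 1)) (isCompact_closedBall _ _)
      ?_ ?_ ?_ ?_ ?_ K
    · intro x
      exact (hQc.comp (cτ τ x))
    · have h1 := hQ1c.comp (cxw τ)
      simp only [Function.comp_def] at h1
      simp only [Function.uncurry_def]
      fun_prop
    · intro y hy w
      exact (hQ1 _).comp y (dx τ y w)
    · intro w hw
      exact hQR _ (sf_large k R x x τ hR hτ.le (by simp) w hw)
    · intro y hy w hw
      rw [Metric.mem_ball, Real.dist_eq] at hy
      try simp only []
      rw [hQ1R _ (sf_large k R y x τ hR hτ.le hy.le w hw)]; simp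
  have dG' : ∀ τ, 1/2 < τ → ∀ x,
      HasDerivAt (fun x => ∫ w in K, Q1 (sf k τ x w) * (-2 * τ ^ 2 * (w k - x)))
      (∫ w in K, (Q2 (sf k τ x w) * (-2 * τ ^ 2 * (w k - x)) * (-2 * τ ^ 2 * (w k - x)) +
        Q1 (sf k τ x w) * (2 * τ ^ 2))) x := by
    intro τ hτ x
    refine hasDerivAt_setIntegral_compact volume
      (fun x w => Q1 (sf k τ x w) * (-2 * τ ^ 2 * (w k - x)))
      (fun x w => (Q2 (sf k τ x w) * (-2 * τ ^ 2 * (w k - x)) * (-2 * τ ^ 2 * (w k - x)) +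
        Q1 (sf k τ x w) * (2 * τ ^ 2)))
      x 1 one_pos (Metric.closedBall 0 (2 * R + |x| + 1)) (isCompact_closedBall _ _)
      ?_ ?_ ?_ ?_ ?_ K
    · intro x
      have h1 := hQ1c.comp (cτ τ x)
      simp only [Function.comp_def] at h1
      fun_prop
    · have h1 := hQ1c.comp (cxw τ)
      have h2 := hQ2c.comp (cxw τ)
      simp only [Function.comp_def] at h1 h2
      simp only [Function.uncurry_def]
      fun_prop
    · intro y hy w
      have := ((hQ2 _).comp y (dx τ y w)).mul
        (((hasDerivAt_id y).const_sub (w k)).const_mul (-2 * τ ^ 2))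
      refine HasDerivAt.congr_deriv (f := _) this ?_
      simp; try ring
    · intro w hw
      try simp only []
      rw [hQ1R _ (sf_large k R x x τ hR hτ.le (by simp) w hw)]; simp
    · intro y hy w hw
      rw [Metric.mem_ball, Real.dist_eq] at hy
      try simp only []
      rw [hQ1R _ (sf_large k R y x τ hR hτ.le hy.le w hw),
        hQ2R _ (sf_large k R y x τ hR hτ.le hy.le w hw)]; simp
  have hnp : ∀ τ, 1/2 < τ →
      0 ≤ ∫ w in K, (-2 * Q1 (sf k τ 0 w) + -2 * τ * (Q2 (sf k τ 0 w) * (2 * τ * (w k) ^ 2))) := by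
    intro τ hτ
    have h := second_deriv_nonpos _ _ _ (dG τ hτ) (dG' τ hτ 0)
      (anderson_fun k Q hQc hQa hQ0 R hR hQR τ hτ.le K hK hKm hKs)
    have e : ∫ w in K, (Q2 (sf k τ 0 w) * (-2 * τ ^ 2 * (w k - 0)) * (-2 * τ ^ 2 * (w k - 0)) +
        Q1 (sf k τ 0 w) * (2 * τ ^ 2)) = (-τ ^ 2) * ∫ w in K, (-2 * Q1 (sf k τ 0 w) +
          -2 * τ * (Q2 (sf k τ 0 w) * (2 * τ * (w k) ^ 2))) := by
      rw [← integral_const_mul]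
      refine integral_congr_ae (Filter.Eventually.of_forall fun w => ?_)
      try simp only []
      ring
    rw [e] at h
    have hτ2 : 0 < τ ^ 2 := by positivity
    by_contra hc
    push Not at hc
    nlinarith
  refine monotoneOn_of_deriv_nonneg (convex_Ici 1) ?_ ?_ ?_
  · intro τ hτ
    have hτ : 1 ≤ τ := hτ
    exact (dI τ (by linarith)).continuousAt.continuousWithinAt
  · rw [interior_Ici]
    intro τ hτ
    have hτ : 1 < τ := hτ
    exact (dI τ (by linarith)).differentiableAt.differentiableWithinAt
  · rw [interior_Ici]
    intro τ hτ
    have hτ : 1 < τ := hτ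
    rw [(dI τ (by linarith)).deriv]
    exact hnp τ (by linarith)
end

lemma exists_Q (R : ℝ) (hR : 1 < R) : ∃ Q Q1 Q2 : ℝ → ℝ, (∀ s, HasDerivAt Q (Q1 s) s) ∧
    (∀ s, HasDerivAt Q1 (Q2 s) s) ∧ Continuous Q2 ∧ Antitone Q ∧ (∀ s, 0 ≤ Q s) ∧
    (∀ s, R < s → Q s = 0) ∧ (∀ s, R < s → Q1 s = 0) ∧ (∀ s, R < s → Q2 s = 0) ∧
    (∀ s, s < 1 → Q1 s = 0) ∧ (∀ s, Q1 s ≤ 0) ∧ (∃ s, 1 < s ∧ Q1 s < 0) := by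
  set Q : ℝ → ℝ := fun s => Real.smoothTransition ((R - s) / (R - 1)) with hQ
  have hR1 : 0 < R - 1 := by linarith
  have hsm : ContDiff ℝ 2 Q := by
    have h : ContDiff ℝ 2 Real.smoothTransition := Real.smoothTransition.contDiff (n := 2)
    refine h.comp ?_
    fun_prop
  have hQd : Differentiable ℝ Q := hsm.differentiable (by norm_num)
  have hsm1 : ContDiff ℝ 1 (deriv Q) := by
    have := ContDiff.iterate_deriv' 1 1 (f := Q) (by exact_mod_cast hsm)
    simpa using this
  have hQ1d : Differentiable ℝ (deriv Q) := hsm1.differentiable (by norm_num)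
  have hanti : Antitone Q := by
    intro a b hab
    apply Real.smoothTransition.monotone
    gcongr
  have h0 : ∀ s, R ≤ s → Q s = 0 := fun s hs =>
    Real.smoothTransition.zero_of_nonpos (div_nonpos_of_nonpos_of_nonneg (by linarith) hR1.le)
  have h1 : ∀ s, s ≤ 1 → Q s = 1 := fun s hs =>
    Real.smoothTransition.one_of_one_le (by rw [le_div_iff₀ hR1]; linarith)
  have hQ1R : ∀ s, R < s → deriv Q s = 0 := by
    intro s hs
    have : Q =ᶠ[nhds s] fun _ => 0 := by
      filter_upwards [Ioi_mem_nhds hs] with x hx using h0 x (le_of_lt hx)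
    rw [this.deriv_eq]; simp
  refine ⟨Q, deriv Q, deriv (deriv Q), fun s => (hQd s).hasDerivAt, fun s => (hQ1d s).hasDerivAt,
    hsm1.continuous_deriv le_rfl, hanti, fun s => Real.smoothTransition.nonneg _,
    fun s hs => h0 s hs.le, hQ1R, ?_, ?_, fun s => hanti.deriv_nonpos, ?_⟩
  · intro s hs
    have : deriv Q =ᶠ[nhds s] fun _ => 0 := by
      filter_upwards [Ioi_mem_nhds hs] with x hx using hQ1R x hx
    rw [this.deriv_eq]; simp
  · intro s hs
    have : Q =ᶠ[nhds s] fun _ => 1 := by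
      filter_upwards [Iio_mem_nhds hs] with x hx using h1 x (le_of_lt hx)
    rw [this.deriv_eq]; simp
  · obtain ⟨c, hc, e⟩ := exists_deriv_eq_slope Q hR hQd.continuous.continuousOn
      hQd.differentiableOn
    refine ⟨c, hc.1, ?_⟩
    rw [e, h0 R le_rfl, h1 1 le_rfl]
    apply div_neg_of_neg_of_pos <;> linarith

section
variable {ι : Type} [Fintype ι] [DecidableEq ι]

noncomputable def shp (Q1 : ℝ → ℝ) (w : ι → ℝ) : ℝ≥0∞ := ENNReal.ofReal (-2 * Q1 (∑ i, w i ^ 2))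

lemma shell_step (k : ι) (Q Q1 Q2 : ℝ → ℝ) (hQ1 : ∀ s, HasDerivAt Q (Q1 s) s)
    (hQ2 : ∀ s, HasDerivAt Q1 (Q2 s) s) (hQ2c : Continuous Q2)
    (hQa : Antitone Q) (hQ0 : ∀ s, 0 ≤ Q s)
    (R : ℝ) (hR : 1 < R) (hQR : ∀ s, R < s → Q s = 0) (hQ1R : ∀ s, R < s → Q1 s = 0)
    (hQ2R : ∀ s, R < s → Q2 s = 0) (hneg : ∀ s, Q1 s ≤ 0)
    (K : Set (ι → ℝ)) (hK : Convex ℝ K) (hKm : MeasurableSet K) (hKs : ∀ x ∈ K, -x ∈ K)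
    (d : ℝ) (hd : 0 < d) (hd1 : d ≤ 1) :
    volume.withDensity (shp Q1) K ≤
      volume.withDensity (shp Q1) {z | (fun i => if i = k then d * z i else z i) ∈ K} := by
  have hQ1c : Continuous Q1 := continuous_iff_continuousAt.2 fun s => (hQ2 s).continuousAt
  have hpm : Measurable (shp Q1 : (ι → ℝ) → ℝ≥0∞) := by
    unfold shp
    have := hQ1c.measurable
    fun_prop
  have cτ : ∀ τ, Continuous (fun w : ι → ℝ => sf k τ 0 w) := fun τ =>
    (continuous_sf3 k).comp (by fun_prop : Continuous fun w : ι → ℝ => (τ, (0 : ℝ), w))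
  have hIntg : ∀ τ, 1 ≤ τ → Integrable (fun w : ι → ℝ => -2 * τ * Q1 (sf k τ 0 w)) := by
    intro τ hτ
    refine (continuous_const.mul (hQ1c.comp (cτ τ))).integrable_of_hasCompactSupport ?_
    refine HasCompactSupport.intro (isCompact_closedBall (0 : ι → ℝ) (2 * R + |0| + 1)) ?_
    intro w hw
    show -2 * τ * Q1 (sf k τ 0 w) = 0
    rw [hQ1R _ (sf_large k R 0 0 τ hR (by linarith) (by simp) w hw)]; simp
  set τ := d⁻¹ with hτ
  have hτ1 : 1 ≤ τ := (one_le_inv₀ hd).2 hd1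
  have hτ0 : 0 < τ := by linarith
  have hmono := mono_tau k Q Q1 Q2 hQ1 hQ2 hQ2c hQa hQ0 R hR hQR hQ1R hQ2R K hK hKm hKs
    (Set.self_mem_Ici (a := (1:ℝ))) (Set.mem_Ici.2 hτ1) hτ1
  simp only at hmono
  have lin : ∀ τ, 1 ≤ τ → ENNReal.ofReal (∫ w in K, -2 * τ * Q1 (sf k τ 0 w)) =
      ∫⁻ w in K, ENNReal.ofReal (-2 * τ * Q1 (sf k τ 0 w)) := by
    intro τ hτ
    refine ofReal_integral_eq_lintegral_ofReal (hIntg τ hτ).integrableOn ?_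
    refine Filter.Eventually.of_forall fun w => ?_
    have := hneg (sf k τ 0 w)
    show 0 ≤ -2 * τ * Q1 (sf k τ 0 w)
    nlinarith
  have hmono' := ENNReal.ofReal_le_ofReal hmono
  rw [lin 1 le_rfl, lin τ hτ1] at hmono'
  set K' := {z : ι → ℝ | (fun i => if i = k then d * z i else z i) ∈ K} with hK'
  have hK'm : MeasurableSet K' := by
    have : Measurable (fun z : ι → ℝ => (fun i => if i = k then d * z i else z i)) := by
      refine measurable_pi_lambda _ fun i => ?_
      by_cases h : i = k <;> simp only [h, if_true, if_false] <;> fun_prop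
    exact this hKm
  rw [withDensity_apply _ hKm, withDensity_apply _ hK'm]
  set v : ι → ℝ := fun i => if i = k then τ else 1 with hv
  have hdet : (Matrix.diagonal v).det = τ := by
    rw [Matrix.det_diagonal]
    simp [hv]
  have hvol := Real.smul_map_diagonal_volume_pi (D := v) (by rw [hdet]; exact hτ0.ne')
  rw [hdet, abs_of_pos hτ0] at hvol
  calc _ = ∫⁻ w in K, ENNReal.ofReal (-2 * 1 * Q1 (sf k 1 0 w)) := by
        refine lintegral_congr fun w => ?_
        rw [sf_one]; simp [shp]
    _ ≤ _ := hmono'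
    _ = ENNReal.ofReal τ * ∫⁻ w in K, shp Q1 (Matrix.toLin' (Matrix.diagonal v) w) := by
        rw [← lintegral_const_mul]
        · refine lintegral_congr fun w => ?_
          rw [shp, ← ENNReal.ofReal_mul hτ0.le]
          have : ∑ i, (Matrix.toLin' (Matrix.diagonal v) w) i ^ 2 = sf k τ 0 w := by
            rw [← Finset.sum_erase_add _ _ (Finset.mem_univ k)]
            unfold sf
            congr 1
            · refine Finset.sum_congr rfl fun i hi => ?_
              have : i ≠ k := Finset.ne_of_mem_erase hi
              simp [Matrix.mulVec_diagonal, hv, this]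
            · simp [Matrix.mulVec_diagonal, hv]; ring
          rw [this]
          congr 1; ring
        · exact hpm.comp (LinearMap.continuous_of_finiteDimensional _).measurable
    _ = ENNReal.ofReal τ * ∫⁻ w in (Matrix.toLin' (Matrix.diagonal v)) ⁻¹' K',
          shp Q1 (Matrix.toLin' (Matrix.diagonal v) w) := by
        congr 3
        ext w
        have : (fun i => if i = k then d * (Matrix.toLin' (Matrix.diagonal v) w) i
            else (Matrix.toLin' (Matrix.diagonal v) w) i) = w := by
          funext i
          by_cases h : i = k
          · simp only [h, if_true]
            simp [Matrix.mulVec_diagonal, hv, hτ, hd.ne']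
          · simp [Matrix.mulVec_diagonal, hv, h]
        simp only [hK', Set.mem_preimage, Set.mem_ofPred_eq, this]
    _ = ∫⁻ w in K', shp Q1 w := by
        rw [← setLIntegral_map hK'm hpm (LinearMap.continuous_of_finiteDimensional _).measurable]
        conv_rhs => rw [← hvol]
        rw [Measure.restrict_smul, lintegral_smul_measure, smul_eq_mul]

lemma shell_diag (Q Q1 Q2 : ℝ → ℝ) (hQ1 : ∀ s, HasDerivAt Q (Q1 s) s)
    (hQ2 : ∀ s, HasDerivAt Q1 (Q2 s) s) (hQ2c : Continuous Q2)
    (hQa : Antitone Q) (hQ0 : ∀ s, 0 ≤ Q s)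
    (R : ℝ) (hR : 1 < R) (hQR : ∀ s, R < s → Q s = 0) (hQ1R : ∀ s, R < s → Q1 s = 0)
    (hQ2R : ∀ s, R < s → Q2 s = 0) (hneg : ∀ s, Q1 s ≤ 0)
    (d : ι → ℝ) (hd : ∀ i, 0 < d i) (hd1 : ∀ i, d i ≤ 1) (S : Finset ι)
    (K : Set (ι → ℝ)) (hK : Convex ℝ K) (hKm : MeasurableSet K) (hKs : ∀ x ∈ K, -x ∈ K) :
    volume.withDensity (shp Q1) K ≤
      volume.withDensity (shp Q1) {z | (fun i => if i ∈ S then d i * z i else z i) ∈ K} := by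
  induction S using Finset.induction_on with
  | empty => simp only [Finset.notMem_empty, if_false]; exact le_refl _
  | insert k S hk ih =>
    refine ih.trans ?_
    have hmeas : Measurable (fun z : ι → ℝ => (fun i => if i ∈ S then d i * z i else z i)) := by
      refine measurable_pi_lambda _ fun i => ?_
      by_cases h : i ∈ S <;> simp only [h, if_true, if_false] <;> fun_prop
    have := shell_step k Q Q1 Q2 hQ1 hQ2 hQ2c hQa hQ0 R hR hQR hQ1R hQ2R hneg
      {z | (fun i => if i ∈ S then d i * z i else z i) ∈ K} ?_ (hmeas hKm) ?_ (d k) (hd k) (hd1 k)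
    · refine this.trans (le_of_eq ?_)
      congr 1
      ext z
      simp only [Set.mem_ofPred_eq]
      have : (fun i => if i ∈ S then d i * (if i = k then d k * z i else z i)
          else (if i = k then d k * z i else z i)) =
          (fun i => if i ∈ insert k S then d i * z i else z i) := by
        funext i
        by_cases h : i = k
        · subst h; simp [hk]
        · simp [h]
      rw [this]
    · intro v hv w hw a b ha hb hab
      have := hK hv hw ha hb hab
      simp only [Set.mem_ofPred_eq]
      convert this using 1
      funext i
      by_cases h : i ∈ S
      · simp [h]; ring
      · simp [h]
    · intro v hv
      have := hKs _ hv
      simp only [Set.mem_ofPred_eq]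
      convert this using 1
      funext i
      by_cases h : i ∈ S <;> simp [h]

lemma exists_shell [Nonempty ι] (ε : ℝ) (hε : 0 < ε) : ∃ ν : Measure (ι → ℝ),
    IsProbabilityMeasure ν ∧ (∀ᵐ w ∂ν, 1 ≤ ∑ i, w i ^ 2 ∧ ∑ i, w i ^ 2 ≤ (1 + ε) ^ 2) ∧
    (∀ K : Set (ι → ℝ), Convex ℝ K → MeasurableSet K → (∀ x ∈ K, -x ∈ K) →
      ∀ d : ι → ℝ, (∀ i, 0 < d i) → (∀ i, d i ≤ 1) →
        ν K ≤ ν {z | (fun i => d i * z i) ∈ K}) ∧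
    (∀ O : Matrix ι ι ℝ, O * Oᵀ = 1 → ν.map (fun w => O *ᵥ w) = ν) := by
  have hR : 1 < (1 + ε) ^ 2 := by nlinarith
  obtain ⟨Q, Q1, Q2, hQ1, hQ2, hQ2c, hQa, hQ0, hQR, hQ1R, hQ2R, hQ1l, hneg, s, hs1, hs⟩ :=
    exists_Q _ hR
  set R := (1 + ε) ^ 2
  have hQ1c : Continuous Q1 := continuous_iff_continuousAt.2 fun s => (hQ2 s).continuousAt
  have hc : Continuous (fun w : ι → ℝ => -2 * Q1 (∑ i, w i ^ 2)) := by fun_prop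
  have hpm : Measurable (shp Q1 : (ι → ℝ) → ℝ≥0∞) := hc.measurable.ennreal_ofReal
  set ν0 : Measure (ι → ℝ) := volume.withDensity (shp Q1) with hν0
  have hfin : ν0 Set.univ ≠ ∞ := by
    rw [hν0, withDensity_apply _ MeasurableSet.univ, Measure.restrict_univ]
    have : Integrable (fun w : ι → ℝ => -2 * Q1 (∑ i, w i ^ 2)) := by
      refine hc.integrable_of_hasCompactSupport ?_
      refine HasCompactSupport.intro (isCompact_closedBall (0 : ι → ℝ) (2 * R + |0| + 1)) ?_
      intro w hw
      obtain ⟨k⟩ := ‹Nonempty ι›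
      rw [← sf_one k, hQ1R _ (sf_large k R 0 0 1 hR (by norm_num) (by simp) w hw)]; simp
    exact this.lintegral_lt_top.ne
  have hpos : ν0 Set.univ ≠ 0 := by
    rw [hν0, withDensity_apply _ MeasurableSet.univ, Measure.restrict_univ]
    refine ((lintegral_pos_iff_support hpm).2 ?_).ne'
    have e : Function.support (shp Q1 : (ι → ℝ) → ℝ≥0∞) = {w | 0 < -2 * Q1 (∑ i, w i ^ 2)} := by
      ext w; rw [Function.mem_support, shp, ne_eq, ENNReal.ofReal_eq_zero, not_le]; rfl
    rw [e]
    refine IsOpen.measure_pos _ (isOpen_lt continuous_const hc) ?_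
    obtain ⟨k⟩ := ‹Nonempty ι›
    refine ⟨Pi.single k (Real.sqrt s), ?_⟩
    have : ∑ i, (Pi.single k (Real.sqrt s) : ι → ℝ) i ^ 2 = s := by
      rw [Finset.sum_eq_single k]
      · simp [Real.sq_sqrt (by linarith : 0 ≤ s)]
      · intro b _ hb; simp [hb]
      · simp
    simp only [Set.mem_ofPred_eq, this]
    linarith
  refine ⟨(ν0 Set.univ)⁻¹ • ν0, ?_, ?_, ?_, ?_⟩
  · constructor
    rw [Measure.smul_apply, smul_eq_mul, ENNReal.inv_mul_cancel hpos hfin]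
  · have h : ∀ᵐ w ∂ν0, 1 ≤ ∑ i, w i ^ 2 ∧ ∑ i, w i ^ 2 ≤ R := by
      rw [hν0, ae_withDensity_iff hpm]
      refine Filter.Eventually.of_forall fun w hw => ?_
      by_contra hcon
      apply hw
      have : Q1 (∑ i, w i ^ 2) = 0 := by
        by_cases h1 : 1 ≤ ∑ i, w i ^ 2
        · exact hQ1R _ (by by_contra h2; exact hcon ⟨h1, not_lt.1 h2⟩)
        · exact hQ1l _ (not_le.1 h1)
      simp [shp, this]
    exact Measure.ae_smul_measure h _
  · intro K hK hKm hKs d hd hd1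
    have := shell_diag Q Q1 Q2 hQ1 hQ2 hQ2c hQa hQ0 R hR hQR hQ1R hQ2R hneg d hd hd1
      Finset.univ K hK hKm hKs
    simp only [Finset.mem_univ, if_true] at this
    rw [Measure.smul_apply, Measure.smul_apply]
    simp only [smul_eq_mul]
    gcongr
  · intro O hO
    have hdet : O.det ^ 2 = 1 := by
      have := congrArg Matrix.det hO
      rw [Matrix.det_mul, Matrix.det_transpose, Matrix.det_one] at this
      rw [sq, this]
    have habs : |O.det⁻¹| = 1 := by
      rw [abs_inv]
      rcases sq_eq_one_iff.1 hdet with h | h <;> simp [h]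
    have hne : O.det ≠ 0 := by rintro h; simp [h] at hdet
    have hvol := Real.map_matrix_volume_pi_eq_smul_volume_pi hne
    rw [habs] at hvol
    simp only [ENNReal.ofReal_one, one_smul] at hvol
    have e : (fun w => O *ᵥ w) = (Matrix.toLin' O : (ι → ℝ) → (ι → ℝ)) := rfl
    have hOm : Measurable (Matrix.toLin' O : (ι → ℝ) → (ι → ℝ)) :=
      (LinearMap.continuous_of_finiteDimensional _).measurable
    rw [Measure.map_smul, e]
    congr 1
    ext B hB
    rw [Measure.map_apply hOm hB, hν0, withDensity_apply _ (hOm hB), withDensity_apply _ hB]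
    conv_rhs => rw [← hvol]
    rw [setLIntegral_map hB hpm hOm]
    refine lintegral_congr fun w => ?_
    unfold shp
    have : ∑ i, (Matrix.toLin' O w) i ^ 2 = ∑ i, w i ^ 2 := by
      have h1 : ∀ x : ι → ℝ, ∑ i, x i ^ 2 = x ⬝ᵥ x := fun x => by simp [dotProduct, sq]
      rw [h1, h1, Matrix.toLin'_apply, Matrix.dotProduct_mulVec, Matrix.vecMul_mulVec,
        mul_eq_one_comm.1 hO]
      simp
    rw [this]
end

lemma law_eq_of_charfn {ι : Type} [Fintype ι] {Ω Ω' : Type*} [MeasurableSpace Ω]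
    [MeasurableSpace Ω'] (P : Measure Ω) [IsProbabilityMeasure P] (P' : Measure Ω')
    [IsProbabilityMeasure P'] (X : Ω → ι → ℝ) (Y : Ω' → ι → ℝ) (hX : Measurable X)
    (hY : Measurable Y)
    (h : ∀ t : ι → ℝ, ∫ ω, Complex.exp (((t ⬝ᵥ X ω : ℝ) : ℂ) * Complex.I) ∂P =
      ∫ ω, Complex.exp (((t ⬝ᵥ Y ω : ℝ) : ℂ) * Complex.I) ∂P') :
    P.map X = P'.map Y := by
  classical
  have := Measure.isProbabilityMeasure_map (μ := P) hX.aemeasurable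
  have := Measure.isProbabilityMeasure_map (μ := P') hY.aemeasurable
  refine Measure.ext_of_charFunDual ?_
  funext L
  have hL : ∀ x, L x = (fun i => L (Pi.single i 1)) ⬝ᵥ x := by
    intro x
    conv_lhs => rw [← Finset.univ_sum_single x]
    rw [map_sum, dotProduct]
    refine Finset.sum_congr rfl fun i _ => ?_
    have : (Pi.single i (x i) : ι → ℝ) = x i • Pi.single i 1 := by
      rw [← Pi.single_smul]; simp
    rw [this, map_smul, smul_eq_mul, mul_comm]
  rw [charFunDual_apply, charFunDual_apply, integral_map hX.aemeasurable, integral_map hY.aemeasurable]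
  · obtain ⟨v, hv⟩ : ∃ v : ι → ℝ, ∀ x, L x = v ⬝ᵥ x := ⟨_, hL⟩
    simp only [hv]
    exact h _
  · exact (by fun_prop : Continuous fun x => Complex.exp (((L x : ℝ) : ℂ) * Complex.I)).aestronglyMeasurable
  · exact (by fun_prop : Continuous fun x => Complex.exp (((L x : ℝ) : ℂ) * Complex.I)).aestronglyMeasurable

section
variable {ι : Type} [Fintype ι] [DecidableEq ι]

lemma exists_orth (a b : ι → ℝ) (h : a ⬝ᵥ a = b ⬝ᵥ b) :
    ∃ O : Matrix ι ι ℝ, O * Oᵀ = 1 ∧ Oᵀ = O ∧ O *ᵥ a = b := by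
  by_cases hab : a = b
  · exact ⟨1, by simp, by simp, by simp [hab]⟩
  set v := a - b with hv
  have hv0 : v ⬝ᵥ v ≠ 0 := by
    rw [Ne, dotProduct_self_eq_zero]
    exact sub_ne_zero.2 hab
  have hva : v ⬝ᵥ v = 2 * (v ⬝ᵥ a) := by
    have hc := dotProduct_comm a b
    simp only [hv, sub_dotProduct, dotProduct_sub]
    linarith
  set c : ℝ := 2 / (v ⬝ᵥ v) with hc
  have hT : (1 - c • vecMulVec v v)ᵀ = 1 - c • vecMulVec v v := by
    simp [Matrix.transpose_sub, Matrix.transpose_smul, Matrix.transpose_vecMulVec]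
  refine ⟨1 - c • vecMulVec v v, ?_, hT, ?_⟩
  · rw [hT]
    simp only [sub_mul, mul_sub, one_mul, mul_one, Matrix.smul_mul, Matrix.mul_smul,
      vecMulVec_mul_vecMulVec]
    have : c * (c * (v ⬝ᵥ v)) = 2 * c := by rw [hc]; field_simp
    ext i j
    simp only [Matrix.sub_apply, Matrix.smul_apply, vecMulVec_apply, smul_eq_mul, Pi.smul_apply,
      MulOpposite.smul_eq_mul_unop]
    linear_combination (v i * v j) * this
  · rw [sub_mulVec, one_mulVec, smul_mulVec, vecMulVec_mulVec]
    have : c * (v ⬝ᵥ a) = 1 := by rw [hc, hva]; field_simp; rw [div_self]; intro h0; rw [h0] at hva; simp at hva; exact hv0 (by simpa using hva)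
    funext i
    simp only [Pi.sub_apply, Pi.smul_apply, smul_eq_mul, MulOpposite.smul_eq_mul_unop,
      MulOpposite.unop_op]
    have hvi : v i = a i - b i := rfl
    linear_combination (-v i) * this - hvi

noncomputable def dirv (w : ι → ℝ) : ι → ℝ := (Real.sqrt (w ⬝ᵥ w))⁻¹ • w

lemma measurable_dirv : Measurable (dirv : (ι → ℝ) → ι → ℝ) := by
  unfold dirv
  simp only [dotProduct]
  fun_prop

lemma rot_char (ν : Measure (ι → ℝ))
    (hν : ∀ O : Matrix ι ι ℝ, O * Oᵀ = 1 → ν.map (fun w => O *ᵥ w) = ν) (a b : ι → ℝ)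
    (h : a ⬝ᵥ a = b ⬝ᵥ b) :
    ∫ w, Complex.exp (((a ⬝ᵥ dirv w : ℝ) : ℂ) * Complex.I) ∂ν =
      ∫ w, Complex.exp (((b ⬝ᵥ dirv w : ℝ) : ℂ) * Complex.I) ∂ν := by
  obtain ⟨O, hO, hOt, hOa⟩ := exists_orth a b h
  have hOO : O * O = 1 := by rw [hOt] at hO; exact hO
  conv_lhs => rw [← hν O hO]
  have hm : Measurable (fun w : ι → ℝ => O *ᵥ w) :=
    (Continuous.matrix_mulVec continuous_const continuous_id).measurable
  rw [integral_map hm.aemeasurable]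
  · refine integral_congr_ae (Filter.Eventually.of_forall fun w => ?_)
    have : a ⬝ᵥ dirv (O *ᵥ w) = b ⬝ᵥ dirv w := by
      have e : (O *ᵥ w) ⬝ᵥ (O *ᵥ w) = w ⬝ᵥ w := by
        rw [Matrix.dotProduct_mulVec, Matrix.vecMul_mulVec, hOt, hOO]; simp
      unfold dirv
      rw [e, dotProduct_smul, dotProduct_smul, dotProduct_mulVec, ← Matrix.mulVec_transpose, hOt,
        hOa]
    simp only [this]
  · have : Measurable fun w : ι → ℝ => Complex.exp (((a ⬝ᵥ dirv w : ℝ) : ℂ) * Complex.I) := by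
      have := measurable_dirv (ι := ι)
      simp only [dotProduct]
      fun_prop
    exact this.aestronglyMeasurable

variable {Ω : Type*} [MeasurableSpace Ω] (P : Measure Ω) [IsProbabilityMeasure P]

lemma polar_law (Z : Ω → ι → ℝ) (hZ : Measurable Z) (φ : ℝ → ℂ)
    (hφ : ∀ t : ι → ℝ, ∫ ω, Complex.exp (((t ⬝ᵥ Z ω : ℝ) : ℂ) * Complex.I) ∂P = φ (t ⬝ᵥ t))
    (ν : Measure (ι → ℝ)) [IsProbabilityMeasure ν]
    (hν : ∀ O : Matrix ι ι ℝ, O * Oᵀ = 1 → ν.map (fun w => O *ᵥ w) = ν)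
    (hν1 : ∀ᵐ w ∂ν, 0 < w ⬝ᵥ w) :
    P.map Z = (P.prod ν).map (fun p => Real.sqrt (Z p.1 ⬝ᵥ Z p.1) • dirv p.2) := by
  have hd := measurable_dirv (ι := ι)
  refine law_eq_of_charfn P (P.prod ν) Z _ hZ ?_ ?_
  · simp only [dotProduct]
    fun_prop
  intro t
  have hIntg : ∀ g : Ω × (ι → ℝ) → ℝ, Measurable g →
      Integrable (fun p => Complex.exp ((g p : ℂ) * Complex.I)) (P.prod ν) := by
    intro g hg
    refine Integrable.of_bound (C := 1) (by fun_prop) ?_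
    refine Filter.Eventually.of_forall fun p => ?_
    rw [Complex.norm_exp_ofReal_mul_I]
  have m1 : Measurable fun p : Ω × (ι → ℝ) =>
      t ⬝ᵥ (Real.sqrt (Z p.1 ⬝ᵥ Z p.1) • dirv p.2) := by
    simp only [dotProduct]
    fun_prop
  have m2 : Measurable fun p : Ω × (ι → ℝ) => (Real.sqrt (t ⬝ᵥ t) • Z p.1) ⬝ᵥ dirv p.2 := by
    simp only [dotProduct]
    fun_prop
  rw [integral_prod _ (hIntg _ m1)]
  have nn : ∀ x : ι → ℝ, 0 ≤ x ⬝ᵥ x := fun x => by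
    simp only [dotProduct]; exact Finset.sum_nonneg fun i _ => mul_self_nonneg _
  have step : ∀ ω, ∫ w, Complex.exp
      (((t ⬝ᵥ (Real.sqrt (Z ω ⬝ᵥ Z ω) • dirv w) : ℝ) : ℂ) * Complex.I) ∂ν =
      ∫ w, Complex.exp ((((Real.sqrt (t ⬝ᵥ t) • Z ω) ⬝ᵥ dirv w : ℝ) : ℂ) * Complex.I) ∂ν := by
    intro ω
    rw [← rot_char ν hν (Real.sqrt (Z ω ⬝ᵥ Z ω) • t) (Real.sqrt (t ⬝ᵥ t) • Z ω)]
    · simp only [smul_dotProduct, dotProduct_smul]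
    · simp only [smul_dotProduct, dotProduct_smul, smul_eq_mul, ← mul_assoc,
        Real.mul_self_sqrt (nn _)]
      ring
  simp only [step]
  rw [integral_integral_swap (f := fun ω w =>
    Complex.exp ((((Real.sqrt (t ⬝ᵥ t) • Z ω) ⬝ᵥ dirv w : ℝ) : ℂ) * Complex.I)) (hIntg _ m2)]
  rw [hφ t]
  have : ∀ᵐ w ∂ν, ∫ ω, Complex.exp ((((Real.sqrt (t ⬝ᵥ t) • Z ω) ⬝ᵥ dirv w : ℝ) : ℂ) * Complex.I) ∂P
      = φ (t ⬝ᵥ t) := by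
    filter_upwards [hν1] with w hw
    have := hφ (Real.sqrt (t ⬝ᵥ t) • dirv w)
    have e : (Real.sqrt (t ⬝ᵥ t) • dirv w) ⬝ᵥ (Real.sqrt (t ⬝ᵥ t) • dirv w) = t ⬝ᵥ t := by
      have hs : Real.sqrt (w ⬝ᵥ w) ≠ 0 := (Real.sqrt_pos.2 hw).ne'
      unfold dirv
      simp only [smul_dotProduct, dotProduct_smul, smul_eq_mul]
      have h1 := Real.mul_self_sqrt (nn t)
      have h2 := Real.mul_self_sqrt (nn w)
      field_simp
      rw [Real.sq_sqrt (nn t), Real.sq_sqrt (nn w), mul_comm]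
    rw [e] at this
    rw [← this]
    congr 1
    funext ω
    rw [smul_dotProduct, smul_dotProduct, dotProduct_comm (Z ω)]
  rw [integral_congr_ae this]
  simp

lemma core_eps [Nonempty ι] (Z : Ω → ι → ℝ) (hZ : Measurable Z) (φ : ℝ → ℂ)
    (hφ : ∀ t : ι → ℝ, ∫ ω, Complex.exp (((t ⬝ᵥ Z ω : ℝ) : ℂ) * Complex.I) ∂P = φ (t ⬝ᵥ t))
    (N : (ι → ℝ) → ℝ) (hNc : Continuous N) (hNa : ∀ x y, N (x + y) ≤ N x + N y)
    (hNh : ∀ (a : ℝ) x, N (a • x) = |a| * N x) (hN0 : ∀ x, 0 ≤ N x)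
    (d : ι → ℝ) (hd : ∀ i, 0 < d i) (hd1 : ∀ i, d i ≤ 1) (ε : ℝ) (hε : 0 < ε) (c : ℝ) :
    P {ω | N (Z ω) ≤ c} ≤ P {ω | N (fun i => d i * Z ω i) ≤ (1 + ε) * c} := by
  obtain ⟨ν, hνp, hνs, hνK, hνr⟩ := exists_shell (ι := ι) ε hε
  have hss : ∀ w : ι → ℝ, ∑ i, w i ^ 2 = w ⬝ᵥ w := fun x => by simp [dotProduct, sq]
  simp only [hss] at hνs
  have hlaw := polar_law P Z hZ φ hφ ν hνr (by filter_upwards [hνs] with w hw; linarith [hw.1])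
  have hdir := measurable_dirv (ι := ι)
  have hgm : Measurable (fun p : Ω × (ι → ℝ) => Real.sqrt (Z p.1 ⬝ᵥ Z p.1) • dirv p.2) := by
    simp only [dotProduct]
    fun_prop
  have hDc : Continuous (fun x : ι → ℝ => (fun i => d i * x i)) := by fun_prop
  have hA : MeasurableSet {x | N x ≤ c} := measurableSet_le hNc.measurable measurable_const
  have hB : MeasurableSet {x : ι → ℝ | N (fun i => d i * x i) ≤ (1 + ε) * c} :=
    measurableSet_le (hNc.comp hDc).measurable measurable_const
  have eA : P {ω | N (Z ω) ≤ c} = P.map Z {x | N x ≤ c} := (Measure.map_apply hZ hA).symm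
  have eB : P {ω | N (fun i => d i * Z ω i) ≤ (1 + ε) * c} =
    P.map Z {x : ι → ℝ | N (fun i => d i * x i) ≤ (1 + ε) * c} := (Measure.map_apply hZ hB).symm
  rw [eA, eB, hlaw, Measure.map_apply hgm hA, Measure.map_apply hgm hB,
    Measure.prod_apply (hgm hA), Measure.prod_apply (hgm hB)]
  refine lintegral_mono fun ω => ?_
  set r := Real.sqrt (Z ω ⬝ᵥ Z ω) with hr
  have hr0 : 0 ≤ r := Real.sqrt_nonneg _
  set K : Set (ι → ℝ) := {w | r * N w ≤ (1 + ε) * c} with hK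
  have hKconv : Convex ℝ K := by
    intro v hv w hw a b ha hb hab
    simp only [hK, Set.mem_ofPred_eq] at hv hw ⊢
    have h1 := hNa (a • v) (b • w)
    rw [hNh, hNh, abs_of_nonneg ha, abs_of_nonneg hb] at h1
    calc r * N (a • v + b • w) ≤ r * (a * N v + b * N w) := mul_le_mul_of_nonneg_left h1 hr0
      _ = a * (r * N v) + b * (r * N w) := by ring
      _ ≤ a * ((1 + ε) * c) + b * ((1 + ε) * c) := by gcongr
      _ = (1 + ε) * c := by rw [← add_mul, hab, one_mul]
  have hKm : MeasurableSet K := measurableSet_le (by have := hNc.measurable; fun_prop) measurable_const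
  have hKs : ∀ x ∈ K, -x ∈ K := by
    intro x hx
    have := hNh (-1) x
    simp only [hK, Set.mem_ofPred_eq] at hx ⊢
    simp at this
    rwa [this]
  have hkey := hνK K hKconv hKm hKs d hd hd1
  have hw : ∀ w : ι → ℝ, N (r • dirv w) = r * ((Real.sqrt (w ⬝ᵥ w))⁻¹ * N w) := by
    intro w
    rw [hNh, dirv, hNh, abs_of_nonneg hr0, abs_of_nonneg (inv_nonneg.2 (Real.sqrt_nonneg _))]
  have hwD : ∀ w : ι → ℝ, N (fun i => d i * (r • dirv w) i) =
      r * ((Real.sqrt (w ⬝ᵥ w))⁻¹ * N (fun i => d i * w i)) := by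
    intro w
    have : (fun i => d i * (r • dirv w) i) =
        r • (Real.sqrt (w ⬝ᵥ w))⁻¹ • (fun i => d i * w i) := by
      funext i; simp [dirv]; ring
    rw [this, hNh, hNh, abs_of_nonneg hr0, abs_of_nonneg (inv_nonneg.2 (Real.sqrt_nonneg _))]
  refine (le_trans ?_ hkey).trans ?_
  · refine measure_mono_ae ?_
    filter_upwards [hνs] with w hws hmem
    have hmem : N (r • dirv w) ≤ c := hmem
    rw [hw] at hmem
    show r * N w ≤ (1 + ε) * c
    set q := Real.sqrt (w ⬝ᵥ w) with hq
    have hq1 : 1 ≤ q := Real.one_le_sqrt.2 hws.1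
    have hq2 : q ≤ 1 + ε := Real.sqrt_le_iff.2 ⟨by linarith, hws.2⟩
    have e : r * N w = q * (r * (q⁻¹ * N w)) := by
      have : q ≠ 0 := by linarith
      field_simp
    have h0 : 0 ≤ r * (q⁻¹ * N w) := mul_nonneg hr0 (mul_nonneg (by positivity) (hN0 w))
    rw [e]
    exact mul_le_mul hq2 hmem h0 (by linarith)
  · refine measure_mono_ae ?_
    filter_upwards [hνs] with w hws hmem
    have hmem : r * N (fun i => d i * w i) ≤ (1 + ε) * c := hmem
    show N (fun i => d i * (r • dirv w) i) ≤ (1 + ε) * c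
    rw [hwD]
    refine le_trans ?_ hmem
    have hq1 : 1 ≤ Real.sqrt (w ⬝ᵥ w) := Real.one_le_sqrt.2 hws.1
    gcongr
    exact mul_le_of_le_one_left (hN0 _) (inv_le_one_of_one_le₀ hq1)

lemma measure_limit (A : Set Ω) (f : ℕ → Ω → ℝ) (g : Ω → ℝ) (c : ℝ) (hf : ∀ m, Measurable (f m))
    (hlim : ∀ ω, Filter.Tendsto (fun m => f m ω) Filter.atTop (nhds (g ω)))
    (h : ∀ m, P A ≤ P {ω | f m ω ≤ c}) : P A ≤ P {ω | g ω ≤ c} := by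
  set F : ℕ → Set Ω := fun m => ⋃ k ≥ m, {ω | f k ω ≤ c} with hF
  have hFm : ∀ m, MeasurableSet (F m) := fun m =>
    MeasurableSet.iUnion fun k => MeasurableSet.iUnion fun _ =>
      measurableSet_le (hf k) measurable_const
  have hanti : Antitone F := by
    intro a b hab ω hω
    simp only [hF, Set.mem_iUnion] at hω ⊢
    obtain ⟨k, hk, h⟩ := hω
    exact ⟨k, le_trans hab hk, h⟩
  have h1 := tendsto_measure_iInter_atTop (μ := P) (fun m => (hFm m).nullMeasurableSet) hanti
    ⟨0, measure_ne_top _ _⟩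
  have h2 : P A ≤ P (⋂ m, F m) := by
    refine ge_of_tendsto' h1 fun m => (h m).trans (measure_mono ?_)
    intro ω hω
    simp only [hF, Set.mem_iUnion]
    exact ⟨m, le_rfl, hω⟩
  refine h2.trans (measure_mono ?_)
  intro ω hω
  show g ω ≤ c
  refine le_of_tendsto_of_frequently (hlim ω) ?_
  rw [Filter.frequently_atTop]
  intro a
  have := Set.mem_iInter.1 hω a
  simp only [hF, Set.mem_iUnion] at this
  obtain ⟨k, hk, h⟩ := this
  exact ⟨k, hk, h⟩

theorem core_thm (Z : Ω → ι → ℝ) (hZ : Measurable Z) (φ : ℝ → ℂ)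
    (hφ : ∀ t : ι → ℝ, ∫ ω, Complex.exp (((t ⬝ᵥ Z ω : ℝ) : ℂ) * Complex.I) ∂P = φ (t ⬝ᵥ t))
    (N : (ι → ℝ) → ℝ) (hNc : Continuous N) (hNa : ∀ x y, N (x + y) ≤ N x + N y)
    (hNh : ∀ (a : ℝ) x, N (a • x) = |a| * N x) (hN0 : ∀ x, 0 ≤ N x)
    (d : ι → ℝ) (hd : ∀ i, 0 ≤ d i) (hd1 : ∀ i, d i ≤ 1) (c : ℝ) :
    P {ω | N (Z ω) ≤ c} ≤ P {ω | N (fun i => d i * Z ω i) ≤ c} := by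
  rcases isEmpty_or_nonempty ι with hι | hι
  · refine measure_mono fun ω hω => ?_
    have : (fun i => d i * Z ω i) = Z ω := Subsingleton.elim _ _
    simp only [Set.mem_ofPred_eq] at hω ⊢
    rwa [this]
  set e : ℕ → ℝ := fun m => 1 / ((m : ℝ) + 1) with he
  have he0 : ∀ m, 0 < e m := fun m => by simp only [he]; positivity
  have he1 : ∀ m, e m ≤ 1 := fun m => by
    simp only [he]; rw [div_le_one (by positivity)]; linarith [(Nat.cast_nonneg m : (0:ℝ) ≤ m)]
  have het : Filter.Tendsto e Filter.atTop (nhds 0) := tendsto_one_div_add_atTop_nhds_zero_nat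
  refine measure_limit P _ (fun m ω => (1 + e m)⁻¹ * N (fun i => max (d i) (e m) * Z ω i)) _ c
    ?_ ?_ ?_
  · intro m
    have := hNc.measurable
    fun_prop
  · intro ω
    have h1 : Filter.Tendsto (fun m => (1 + e m)⁻¹) Filter.atTop (nhds ((1 + 0 : ℝ)⁻¹)) :=
      (het.const_add 1).inv₀ (by norm_num)
    have h2 : Filter.Tendsto (fun m => N (fun i => max (d i) (e m) * Z ω i)) Filter.atTop
        (nhds (N (fun i => d i * Z ω i))) := by
      refine (hNc.tendsto _).comp ?_
      refine tendsto_pi_nhds.2 fun i => ?_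
      have := (tendsto_const_nhds (x := d i)).max het
      rw [max_eq_left (hd i)] at this
      exact this.mul_const _
    simpa using h1.mul h2
  · intro m
    refine (core_eps P Z hZ φ hφ N hNc hNa hNh hN0 (fun i => max (d i) (e m))
      (fun i => lt_max_of_lt_right (he0 m)) (fun i => max_le (hd1 i) (he1 m)) (e m) (he0 m) c).trans
      (measure_mono fun ω hω => ?_)
    simp only [Set.mem_ofPred_eq] at hω ⊢
    rwa [inv_mul_le_iff₀ (by linarith [he0 m])]
end

lemma spectral_real {ι : Type} [Fintype ι] [DecidableEq ι] (M : Matrix ι ι ℝ) (hM : M.PosSemidef) :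
    ∃ (U : Matrix ι ι ℝ) (l : ι → ℝ), U * Uᵀ = 1 ∧ Uᵀ * U = 1 ∧ M = U * diagonal l * Uᵀ ∧
      ∀ i, 0 ≤ l i := by
  refine ⟨hM.1.eigenvectorUnitary, hM.1.eigenvalues, ?_, ?_, ?_, hM.eigenvalues_nonneg⟩
  · have := Unitary.mul_star_self_of_mem hM.1.eigenvectorUnitary.2
    simpa [star_eq_conjTranspose, conjTranspose_eq_transpose_of_trivial] using this
  · have := Unitary.star_mul_self_of_mem hM.1.eigenvectorUnitary.2
    simpa [star_eq_conjTranspose, conjTranspose_eq_transpose_of_trivial] using this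
  · have := hM.1.spectral_theorem
    conv_lhs => rw [this]
    rw [Unitary.conjStarAlgAut_apply]
    rfl

lemma exists_factor {n : ℕ} (T : Matrix (Fin n) (Fin n) ℝ) (hT : T.PosSemidef) :
    ∃ (p : Fin n → Prop) (_ : DecidablePred p) (B : Matrix (Fin n) {i // p i} ℝ)
      (L : Matrix {i // p i} (Fin n) ℝ), L * B = 1 ∧ B * Bᵀ = T := by
  classical
  obtain ⟨U, l, h1, h2, h3, h4⟩ := spectral_real T hT
  refine ⟨fun i => l i ≠ 0, inferInstance,
    (U * diagonal (fun i => Real.sqrt (l i))).submatrix id Subtype.val,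
    (diagonal (fun i => (Real.sqrt (l i))⁻¹) * Uᵀ).submatrix Subtype.val id, ?_, ?_⟩
  · rw [← Matrix.submatrix_mul _ _ Subtype.val id Subtype.val Function.bijective_id,
      Matrix.mul_assoc, ← Matrix.mul_assoc Uᵀ, h2, Matrix.one_mul, Matrix.diagonal_mul_diagonal]
    ext ⟨i, hi⟩ ⟨j, hj⟩
    have : Real.sqrt (l i) ≠ 0 := (Real.sqrt_pos.2 (lt_of_le_of_ne (h4 i) (Ne.symm hi))).ne'
    by_cases hij : i = j
    · subst hij; simp [this]
    · simp [hij]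
  · rw [h3]
    ext i j
    simp only [Matrix.mul_apply, Matrix.submatrix_apply, Matrix.transpose_apply, id,
      Matrix.diagonal_apply, mul_ite, mul_zero, Finset.sum_ite_eq', Finset.mem_univ, if_true]
    rw [← Finset.sum_subtype (p := fun k => l k ≠ 0) (Finset.univ.filter fun k => l k ≠ 0)
      (by simp) (fun k => U i k * Real.sqrt (l k) * (U j k * Real.sqrt (l k))),
      Finset.sum_filter]
    refine Finset.sum_congr rfl fun k _ => ?_
    by_cases hk : l k = 0
    · simp [hk]
    · simp only [ne_eq, hk, not_false_eq_true, if_true]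
      have := Real.mul_self_sqrt (h4 k)
      linear_combination (U i k * U j k) * this

lemma simul_diag {n : ℕ} (S T : Matrix (Fin n) (Fin n) ℝ) (hS : S.PosSemidef) (hT : T.PosSemidef)
    (hST : (T - S).PosSemidef) :
    ∃ (p : Fin n → Prop) (_ : DecidablePred p) (B : Matrix (Fin n) {i // p i} ℝ)
      (L : Matrix {i // p i} (Fin n) ℝ) (d : {i // p i} → ℝ), L * B = 1 ∧ B * Bᵀ = T ∧
      (∀ i, 0 ≤ d i) ∧ (∀ i, d i ≤ 1) ∧ B * diagonal (fun i => d i * d i) * Bᵀ = S := by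
  obtain ⟨p, hp, B, L, hLB, hBB⟩ := exists_factor T hT
  have hLBt : Bᵀ * Lᵀ = 1 := by rw [← Matrix.transpose_mul, hLB, Matrix.transpose_one]
  have hSt : Sᵀ = S := by
    have := hS.1
    rwa [Matrix.IsHermitian, conjTranspose_eq_transpose_of_trivial] at this
  have hker : ∀ v, T *ᵥ v = 0 → S *ᵥ v = 0 := by
    intro v hv
    rw [← hS.dotProduct_mulVec_zero_iff]
    have h1 := hS.dotProduct_mulVec_nonneg v
    have h2 := hST.dotProduct_mulVec_nonneg v
    rw [sub_mulVec, hv, zero_sub, dotProduct_neg] at h2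
    linarith
  have hTE : T * (1 - Lᵀ * Bᵀ) = 0 := by
    rw [Matrix.mul_sub, Matrix.mul_one, ← hBB, Matrix.mul_assoc B, ← Matrix.mul_assoc Bᵀ Lᵀ, hLBt,
      Matrix.one_mul, sub_self]
  have hSE : S * (1 - Lᵀ * Bᵀ) = 0 := by
    ext i j
    have h1 : T *ᵥ (fun k => (1 - Lᵀ * Bᵀ : Matrix (Fin n) (Fin n) ℝ) k j) = 0 := by
      funext i
      exact congrFun (congrFun hTE i) j
    exact congrFun (hker _ h1) i
  have hS1 : S * (Lᵀ * Bᵀ) = S := by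
    rw [Matrix.mul_sub, Matrix.mul_one, sub_eq_zero] at hSE
    exact hSE.symm
  have hS2 : B * L * S = S := by
    have := congrArg Matrix.transpose hS1
    simpa [Matrix.transpose_mul, hSt] using this
  have hM : (L * S * Lᵀ).PosSemidef := by
    have := hS.mul_mul_conjTranspose_same L
    rwa [conjTranspose_eq_transpose_of_trivial] at this
  have hM1 : (1 - L * S * Lᵀ).PosSemidef := by
    have := hST.mul_mul_conjTranspose_same L
    rw [conjTranspose_eq_transpose_of_trivial, Matrix.mul_sub, Matrix.sub_mul, ← hBB,
      ← Matrix.mul_assoc L, hLB, Matrix.one_mul, hLBt] at this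
    exact this
  obtain ⟨O, l, h1, h2, h3, h4⟩ := spectral_real _ hM
  refine ⟨p, hp, B * O, Oᵀ * L, fun i => Real.sqrt (l i), ?_, ?_, fun i => Real.sqrt_nonneg _, ?_,
    ?_⟩
  · rw [Matrix.mul_assoc, ← Matrix.mul_assoc L, hLB, Matrix.one_mul, h2]
  · rw [Matrix.transpose_mul, Matrix.mul_assoc, ← Matrix.mul_assoc O, h1, Matrix.one_mul, hBB]
  · intro i
    have := hM1.conjTranspose_mul_mul_same O
    rw [conjTranspose_eq_transpose_of_trivial, h3, Matrix.mul_sub, Matrix.sub_mul, Matrix.mul_one,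
      h2, Matrix.mul_assoc, Matrix.mul_assoc, Matrix.mul_assoc, h2, Matrix.mul_one,
      ← Matrix.mul_assoc, h2, Matrix.one_mul] at this
    have := this.diag_nonneg (i := i)
    simp at this
    exact Real.sqrt_le_one.2 this
  · have e : (fun i => Real.sqrt (l i) * Real.sqrt (l i)) = l :=
      funext fun i => Real.mul_self_sqrt (h4 i)
    rw [e, Matrix.transpose_mul]
    calc B * O * diagonal l * (Oᵀ * Bᵀ) = B * (O * diagonal l * Oᵀ) * Bᵀ := by
          simp only [Matrix.mul_assoc]
      _ = B * (L * S * Lᵀ) * Bᵀ := by rw [← h3]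
      _ = (B * L * S) * (Lᵀ * Bᵀ) := by simp only [Matrix.mul_assoc]
      _ = S := by rw [hS2, hS1]

lemma gini_continuous {n : ℕ} : Continuous (gini : (Fin n → ℝ) → ℝ) := by
  unfold gini; fun_prop

lemma gini_add {n : ℕ} (x y : Fin n → ℝ) : gini (x + y) ≤ gini x + gini y := by
  unfold gini
  rw [← mul_add, ← Finset.sum_add_distrib]
  refine mul_le_mul_of_nonneg_left ?_ (by positivity)
  refine Finset.sum_le_sum fun i _ => ?_
  rw [← Finset.sum_add_distrib]
  refine Finset.sum_le_sum fun j _ => ?_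
  have : (x + y) i - (x + y) j = (x i - x j) + (y i - y j) := by simp; ring
  rw [this]
  exact abs_add_le _ _

lemma gini_smul {n : ℕ} (a : ℝ) (x : Fin n → ℝ) : gini (a • x) = |a| * gini x := by
  unfold gini
  rw [mul_left_comm, Finset.mul_sum (Finset.univ : Finset (Fin n)) _ |a|]
  congr 1
  refine Finset.sum_congr rfl fun i _ => ?_
  rw [Finset.mul_sum]
  refine Finset.sum_congr rfl fun j _ => ?_
  rw [← abs_mul]; simp [mul_sub]

lemma gini_nonneg {n : ℕ} (x : Fin n → ℝ) : 0 ≤ gini x := by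
  unfold gini; positivity

lemma gini_shift {n : ℕ} (x : Fin n → ℝ) (c : ℝ) : gini (x - fun _ => c) = gini x := by
  unfold gini; simp

lemma gini_center {n : ℕ} (x : Fin n → ℝ) : gini (centeringMatrix n *ᵥ x) = gini x := by
  have : centeringMatrix n *ᵥ x = x - fun _ => (n : ℝ)⁻¹ * ∑ i, x i := by
    unfold centeringMatrix
    rw [sub_mulVec, one_mulVec, smul_mulVec]
    funext i
    simp [mulVec, dotProduct]
  rw [this, gini_shift]

lemma centering_transpose (n : ℕ) : (centeringMatrix n)ᵀ = centeringMatrix n := by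
  unfold centeringMatrix
  ext i j
  simp [Matrix.one_apply, eq_comm]

lemma centering_ones (n : ℕ) (i j : Fin n) :
    (Matrix.of (fun (_ : Fin n) (_ : Fin n) => (1 : ℝ)) * centeringMatrix n) i j = 0 := by
  have hn : (n : ℝ) ≠ 0 := by
    have := i.pos
    positivity
  unfold centeringMatrix
  rw [Matrix.mul_sub, Matrix.mul_one, Matrix.mul_smul]
  simp [Matrix.mul_apply, hn]

lemma charfn_linear {Ω : Type*} [MeasurableSpace Ω] (P : Measure Ω) {n : ℕ} {κ : Type} [Fintype κ]
    (X : Ω → Fin n → ℝ) (μ : Fin n → ℝ) (S : Matrix (Fin n) (Fin n) ℝ) (φ : ℝ → ℂ)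
    (h : ∀ t : Fin n → ℝ,
      charFn P X t = Complex.exp (((∑ i, t i * μ i : ℝ) : ℂ) * Complex.I) * φ (t ⬝ᵥ S *ᵥ t))
    (M : Matrix κ (Fin n) ℝ) (t : κ → ℝ) :
    ∫ ω, Complex.exp (((t ⬝ᵥ (M *ᵥ (X ω - μ)) : ℝ) : ℂ) * Complex.I) ∂P =
      φ (t ⬝ᵥ (M * S * Mᵀ) *ᵥ t) := by
  set s : Fin n → ℝ := t ᵥ* M with hs
  have h1 := h s
  unfold charFn at h1
  have e : ∀ ω, Complex.exp (((t ⬝ᵥ (M *ᵥ (X ω - μ)) : ℝ) : ℂ) * Complex.I) =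
      Complex.exp (((∑ i, s i * X ω i : ℝ) : ℂ) * Complex.I) *
        Complex.exp (-(((∑ i, s i * μ i : ℝ) : ℂ) * Complex.I)) := by
    intro ω
    rw [← Complex.exp_add, dotProduct_mulVec, ← hs, dotProduct_sub]
    congr 1
    simp only [dotProduct]
    push_cast
    ring
  simp only [e]
  rw [integral_mul_const, h1]
  have e2 : s ⬝ᵥ S *ᵥ s = t ⬝ᵥ (M * S * Mᵀ) *ᵥ t := by
    rw [← Matrix.mulVec_mulVec, ← Matrix.mulVec_mulVec, Matrix.mulVec_transpose, ← hs,
      dotProduct_mulVec t, ← hs]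
  rw [e2, mul_right_comm, ← Complex.exp_add, add_neg_cancel, Complex.exp_zero, one_mul]

lemma main_le {Ω : Type*} [MeasurableSpace Ω]
    (P : Measure Ω) [IsProbabilityMeasure P] {n : ℕ}
    (X Y : Ω → Fin n → ℝ) (hX : Measurable X) (hY : Measurable Y)
    (μ : Fin n → ℝ) (Sx Sy : Matrix (Fin n) (Fin n) ℝ)
    (hSx : Sx.PosSemidef) (hSy : Sy.PosSemidef)
    (φ : ℝ → ℂ)
    (hXell : ∀ t : Fin n → ℝ,
      charFn P X t = Complex.exp (((∑ i, t i * μ i : ℝ) : ℂ) * Complex.I) * φ (t ⬝ᵥ Sx *ᵥ t))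
    (hYell : ∀ t : Fin n → ℝ,
      charFn P Y t = Complex.exp (((∑ i, t i * μ i : ℝ) : ℂ) * Complex.I) * φ (t ⬝ᵥ Sy *ᵥ t))
    (hle : ∃ ε : ℝ, (Sy - Sx + ε • Matrix.of (fun _ _ => (1 : ℝ))).PosSemidef) (c : ℝ) :
    P {ω | gini (Y ω - μ) ≤ c} ≤ P {ω | gini (X ω - μ) ≤ c} := by
  obtain ⟨ε, hε⟩ := hle
  set A := centeringMatrix n with hA
  have hAt : Aᵀ = A := centering_transpose n
  have hAh : Aᴴ = A := by rw [conjTranspose_eq_transpose_of_trivial, hAt]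
  have hS : (A * Sx * Aᵀ).PosSemidef := by
    have := hSx.mul_mul_conjTranspose_same A
    rwa [conjTranspose_eq_transpose_of_trivial] at this
  have hT : (A * Sy * Aᵀ).PosSemidef := by
    have := hSy.mul_mul_conjTranspose_same A
    rwa [conjTranspose_eq_transpose_of_trivial] at this
  have hST : (A * Sy * Aᵀ - A * Sx * Aᵀ).PosSemidef := by
    have := hε.mul_mul_conjTranspose_same A
    have h1 : Matrix.of (fun (_ : Fin n) (_ : Fin n) => (1 : ℝ)) * A = 0 := by
      ext i j; exact centering_ones n i j
    rw [hAh, Matrix.mul_assoc, Matrix.add_mul, Matrix.smul_mul, h1, smul_zero, add_zero,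
      Matrix.sub_mul, Matrix.mul_sub, ← Matrix.mul_assoc, ← Matrix.mul_assoc] at this
    rwa [hAt]
  obtain ⟨p, hp, B, L, d, hLB, hBB, hd0, hd1, hBd⟩ := simul_diag _ _ hS hT hST
  have hXm : Measurable fun ω => X ω - μ := hX.sub_const μ
  have hYm : Measurable fun ω => Y ω - μ := hY.sub_const μ
  have mv : ∀ {κ κ' : Type} [Fintype κ] [Fintype κ'] (M : Matrix κ κ' ℝ),
      Continuous fun x : κ' → ℝ => M *ᵥ x := fun M =>
    Continuous.matrix_mulVec continuous_const continuous_id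
  set Z : Ω → {i // p i} → ℝ := fun ω => (L * A) *ᵥ (Y ω - μ) with hZ
  have hZm : Measurable Z := (mv (L * A)).measurable.comp hYm
  have hLBt : Bᵀ * Lᵀ = 1 := by rw [← Matrix.transpose_mul, hLB, Matrix.transpose_one]
  have hZφ : ∀ t : {i // p i} → ℝ,
      ∫ ω, Complex.exp (((t ⬝ᵥ Z ω : ℝ) : ℂ) * Complex.I) ∂P = φ (t ⬝ᵥ t) := by
    intro t
    rw [charfn_linear P Y μ Sy φ hYell (L * A) t]
    have : L * A * Sy * (L * A)ᵀ = 1 := by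
      calc L * A * Sy * (L * A)ᵀ = L * (A * Sy * Aᵀ) * Lᵀ := by
            rw [Matrix.transpose_mul]; simp only [Matrix.mul_assoc]
        _ = (L * B) * (Bᵀ * Lᵀ) := by rw [← hBB]; simp only [Matrix.mul_assoc]
        _ = 1 := by rw [hLB, hLBt, Matrix.one_mul]
    rw [this, one_mulVec]
  have hCZ : ∀ (C : Matrix (Fin n) {i // p i} ℝ) (W : Ω → Fin n → ℝ) (S : Matrix (Fin n) (Fin n) ℝ)
      (_ : Measurable W) (_ : ∀ t : Fin n → ℝ,
      charFn P W t = Complex.exp (((∑ i, t i * μ i : ℝ) : ℂ) * Complex.I) * φ (t ⬝ᵥ S *ᵥ t))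
      (_ : C * Cᵀ = A * S * Aᵀ), ∀ c, P {ω | gini (W ω - μ) ≤ c} = P {ω | gini (C *ᵥ Z ω) ≤ c} := by
    intro C W S hW hWell hC c
    have hWm : Measurable fun ω => A *ᵥ (W ω - μ) := (mv A).measurable.comp (hW.sub_const μ)
    have hCm : Measurable fun ω => C *ᵥ Z ω := (mv C).measurable.comp hZm
    have hlaw : P.map (fun ω => A *ᵥ (W ω - μ)) = P.map (fun ω => C *ᵥ Z ω) := by
      refine law_eq_of_charfn P P _ _ hWm hCm fun t => ?_
      rw [charfn_linear P W μ S φ hWell A t, ← hC]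
      have := hZφ (t ᵥ* C)
      simp only [dotProduct_mulVec t C]
      rw [this]
      congr 1
      rw [← Matrix.mulVec_mulVec, Matrix.mulVec_transpose, dotProduct_mulVec t]
    have hset : MeasurableSet {x : Fin n → ℝ | gini x ≤ c} :=
      measurableSet_le gini_continuous.measurable measurable_const
    have := congrArg (fun m => m {x : Fin n → ℝ | gini x ≤ c}) hlaw
    beta_reduce at this
    rw [Measure.map_apply hWm hset, Measure.map_apply hCm hset] at this
    rw [← show ((fun ω => C *ᵥ Z ω) ⁻¹' {x | gini x ≤ c}) = {ω | gini (C *ᵥ Z ω) ≤ c} from rfl,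
      ← this]
    congr 1
    ext ω
    simp only [Set.mem_preimage, Set.mem_ofPred_eq, hA, gini_center]
  rw [hCZ B Y Sy hY hYell hBB c, hCZ (B * diagonal d) X Sx hX hXell ?_ c]
  · have := core_thm P Z hZm φ hZφ (fun x => gini (B *ᵥ x)) (gini_continuous.comp (mv B))
      (fun x y => by simp only [mulVec_add]; exact gini_add _ _)
      (fun a x => by simp only [mulVec_smul]; exact gini_smul _ _) (fun x => gini_nonneg _)
      d hd0 hd1 c
    refine this.trans (le_of_eq ?_)
    congr 1
    ext ω
    have e : (fun i => d i * Z ω i) = diagonal d *ᵥ Z ω := by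
      funext i; rw [mulVec_diagonal]
    simp only [Set.mem_ofPred_eq, e, mulVec_mulVec]
  · rw [← hBd, Matrix.transpose_mul, Matrix.diagonal_transpose, Matrix.mul_assoc,
      ← Matrix.mul_assoc (diagonal d), Matrix.diagonal_mul_diagonal, ← Matrix.mul_assoc]

/-- If `X ∼ ELLₙ(μ, Σx, φ)`, `Y ∼ ELLₙ(μ, Σy, φ)` and there exists
`ε ∈ ℝ` such that `Σy − Σx + ε·1_{n×n}` is positive semidefinite, then
`G_n(AX − Aμ) ≤_st G_n(AY − Aμ)` for the centering matrix `A`; in particular,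
if `μ = c·1ₙ` then `G_n(X) ≤_st G_n(Y)`. -/
theorem gini_st_order_elliptical_eps {Ω : Type*} [MeasurableSpace Ω]
    (P : Measure Ω) [IsProbabilityMeasure P] {n : ℕ}
    (X Y : Ω → Fin n → ℝ) (hX : Measurable X) (hY : Measurable Y)
    (μ : Fin n → ℝ) (Sx Sy : Matrix (Fin n) (Fin n) ℝ)
    (hSx : Sx.PosSemidef) (hSy : Sy.PosSemidef)
    (φ : ℝ → ℂ)
    (hXell : ∀ t : Fin n → ℝ,
      charFn P X t = Complex.exp (((∑ i, t i * μ i : ℝ) : ℂ) * Complex.I) * φ (t ⬝ᵥ Sx *ᵥ t))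
    (hYell : ∀ t : Fin n → ℝ,
      charFn P Y t = Complex.exp (((∑ i, t i * μ i : ℝ) : ℂ) * Complex.I) * φ (t ⬝ᵥ Sy *ᵥ t))
    (hle : ∃ ε : ℝ, (Sy - Sx + ε • Matrix.of (fun _ _ => (1 : ℝ))).PosSemidef) :
    (∀ t : ℝ, P {ω | t < gini (centeringMatrix n *ᵥ X ω - centeringMatrix n *ᵥ μ)}
        ≤ P {ω | t < gini (centeringMatrix n *ᵥ Y ω - centeringMatrix n *ᵥ μ)}) ∧
    (∀ c : ℝ, μ = (fun _ => c) →
      ∀ t : ℝ, P {ω | t < gini (X ω)} ≤ P {ω | t < gini (Y ω)}) := by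
  have hmain := main_le P X Y hX hY μ Sx Sy hSx hSy φ hXell hYell hle
  have compl : ∀ (W : Ω → Fin n → ℝ), Measurable W → ∀ t : ℝ,
      P {ω | t < gini (W ω - μ)} = 1 - P {ω | gini (W ω - μ) ≤ t} := by
    intro W hW t
    have hm : MeasurableSet {ω | gini (W ω - μ) ≤ t} :=
      measurableSet_le (gini_continuous.measurable.comp (hW.sub_const μ)) measurable_const
    rw [← prob_compl_eq_one_sub hm]
    congr 1
    ext ω
    simp only [Set.mem_ofPred_eq, Set.mem_compl_iff, not_le]
  have h1 : ∀ t : ℝ, P {ω | t < gini (X ω - μ)} ≤ P {ω | t < gini (Y ω - μ)} := by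
    intro t
    rw [compl X hX t, compl Y hY t]
    exact tsub_le_tsub_left (hmain t) 1
  refine ⟨fun t => ?_, fun c hc t => ?_⟩
  · simp only [← Matrix.mulVec_sub, gini_center]
    exact h1 t
  · have := h1 t
    simp only [hc, gini_shift] at this
    exact this
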